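/- arXiv:1306.0537 — 2 statements merged into one kernel-verified Lean document; each statement's English description precedes it below -/
import Mathlib

section
/- Fix a positive integer q, a residue class a modulo q with gcd(a,q) = 1, and a real number u with 0 < u ≤ 1. Then the solutions n of n/σ(n) ≤ u that are relatively prime to q are equidistributed among the coprime residue classes modulo q; precisely, the limit lim_{x→∞} (1/x) #{n ≤ x : n/σ(n) ≤ u, gcd(n,q)=1, and n ≡ a (mod q)} exists, equals (1/φ(q)) · lim_{x→∞} (1/x) #{n ≤ x : n/σ(n) ≤ u and gcd(n,q)=1}, and this common limit (before dividing by φ(q)) is positive. -/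
open Filter ArithmeticFunction

/-- The ratio `n/σ(n)` as a real number. -/
noncomputable def sigmaRatio (n : ℕ) : ℝ := (n : ℝ) / ((sigma 1 n : ℕ) : ℝ)

/-!
Write `t = 1/u`, so that `n/σ(n) ≤ u` means that the abundancy `∑ 1/d` over the divisors `d` of `n`
is at least `t`. For `n` coprime to `q`, compare the abundancy of `n` with that of `gcd(n, K)`, where
`K` is the product of the integers in `[1, M]` coprime to `q`. The condition that the truncated
abundancy is at least `t` is `K`-periodic, hence has a density; as `K` is coprime to `q`, the Chinese
remainder theorem (`cnt_crt`) makes it independent of the residue of `n` modulo `q`. These densities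
increase with `M` to a limit `D`, which is positive because the sum of the reciprocals of the
primes not dividing `q` diverges, so that `K` itself satisfies the condition for large `M`.

What remains is that the truncation loses only a set of small upper density
(`eventually_cnt_error_le`). If the abundancy of `n` reaches `t` but its truncation does not, then
either truncation costs at least `e`, which is rare by a first-moment bound (`sum_abund_sub_le`), or
the truncated abundancy lies in `[t - e, t)`. The latter is where continuity of the distribution is
needed (`band_density`): take a finite set `P` of primes dividing `K`, and `e` small in terms of
`P`. If `n` and `n'` lie in the band, `p ∤ n` and `p' ∤ n'` with `p, p'` in `P`, then `p n = p' n'`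
forces `p = p'`, since the factors `1 + 1/p` are well separated. So the products `p n` are distinct,
and counting them gives (density of the band) · `∑ 1/p` `≤ 1 + ∑ 1/p² ≤ 2`. The divergence of
`∑ 1/p` over the primes not dividing `q` finishes the proof.
-/

/-! ### Counting functions and densities of periodic sets -/

open Classical in
/-- The number of `n ∈ [1, N]` with `p n`. -/
noncomputable def cnt (p : ℕ → Prop) (N : ℕ) : ℕ := ((Finset.Icc 1 N).filter p).card

lemma cnt_eq (p : ℕ → Prop) [DecidablePred p] (N : ℕ) :
    cnt p N = ((Finset.Icc 1 N).filter p).card := by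
  unfold cnt
  congr

lemma cnt_le (p : ℕ → Prop) (N : ℕ) : cnt p N ≤ N := by
  classical
  rw [cnt_eq]
  exact (Finset.card_filter_le _ _).trans (by simp)

lemma cnt_imp {p r : ℕ → Prop} (h : ∀ n, 1 ≤ n → p n → r n) (N : ℕ) : cnt p N ≤ cnt r N := by
  classical
  rw [cnt_eq, cnt_eq]
  apply Finset.card_le_card
  intro n hn
  simp only [Finset.mem_filter, Finset.mem_Icc] at hn ⊢
  exact ⟨hn.1, h n hn.1.1 hn.2⟩

lemma cnt_or {p r s : ℕ → Prop} (h : ∀ n, 1 ≤ n → p n → r n ∨ s n) (N : ℕ) :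
    cnt p N ≤ cnt r N + cnt s N := by
  classical
  rw [cnt_eq, cnt_eq, cnt_eq]
  refine le_trans (Finset.card_le_card ?_) (Finset.card_union_le _ _)
  intro n hn
  simp only [Finset.mem_filter, Finset.mem_Icc, Finset.mem_union] at hn ⊢
  rcases h n hn.1.1 hn.2 with h | h
  · exact Or.inl ⟨hn.1, h⟩
  · exact Or.inr ⟨hn.1, h⟩

lemma cnt_mono (p : ℕ → Prop) : Monotone (cnt p) := by
  classical
  intro M N h
  rw [cnt_eq, cnt_eq]
  exact Finset.card_le_card (Finset.filter_subset_filter _ (Finset.Icc_subset_Icc le_rfl h))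

lemma cnt_period {p : ℕ → Prop} [DecidablePred p] {K : ℕ} (hp : Function.Periodic p K) :
    cnt p K = ((Finset.range K).filter p).card := by
  rw [cnt_eq, ← Nat.count_eq_card_filter_range, ← Nat.filter_Ico_card_eq_of_periodic 1 K p hp]
  congr 2
  ext n
  simp
  omega

lemma cnt_mul {p : ℕ → Prop} {K : ℕ} (hp : Function.Periodic p K) (j : ℕ) :
    cnt p (K * j) = cnt p K * j := by
  classical
  induction j with
  | zero => simp [cnt]
  | succ j ih =>
    have h1 : Finset.Icc 1 (K * (j + 1)) =
        Finset.Icc 1 (K * j) ∪ Finset.Ico (K * j + 1) (K * j + 1 + K) := by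
      ext n
      simp only [Finset.mem_Icc, Finset.mem_union, Finset.mem_Ico, mul_add]
      omega
    have h2 : Disjoint (Finset.Icc 1 (K * j)) (Finset.Ico (K * j + 1) (K * j + 1 + K)) := by
      rw [Finset.disjoint_left]
      intro n hn hn'
      simp only [Finset.mem_Icc, Finset.mem_Ico] at hn hn'
      omega
    rw [cnt_eq p (K * (j + 1)), h1, Finset.filter_union,
      Finset.card_union_of_disjoint (Finset.disjoint_filter_filter h2), ← cnt_eq, ih,
      Nat.filter_Ico_card_eq_of_periodic _ K p hp, Nat.count_eq_card_filter_range,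
      ← cnt_period hp]
    ring

/-- A `K`-periodic set has a natural density, equal to its proportion in one period. -/
lemma tendsto_cnt {p : ℕ → Prop} {K : ℕ} (hK : 0 < K) (hp : Function.Periodic p K) :
    Tendsto (fun N : ℕ => (cnt p N : ℝ) / N) atTop (nhds ((cnt p K : ℝ) / K)) := by
  have hK' : (0 : ℝ) < K := by exact_mod_cast hK
  have hDK : (cnt p K : ℝ) ≤ K := by exact_mod_cast cnt_le p K
  have hD : (0 : ℝ) ≤ cnt p K := by positivity
  have hlim : Tendsto (fun N : ℕ => (K : ℝ) / N) atTop (nhds 0) :=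
    tendsto_const_div_atTop_nhds_zero_nat _
  rw [tendsto_iff_dist_tendsto_zero]
  refine squeeze_zero' (Eventually.of_forall fun _ => dist_nonneg) ?_ hlim
  filter_upwards [eventually_gt_atTop 0] with N hN
  have hN' : (0 : ℝ) < N := by exact_mod_cast hN
  have h1 : (cnt p K : ℝ) * (N / K : ℕ) ≤ cnt p N := by
    rw [← Nat.cast_mul, ← cnt_mul hp]
    exact_mod_cast cnt_mono p (Nat.mul_div_le N K)
  have h2 : (cnt p N : ℝ) ≤ cnt p K * ((N / K : ℕ) + 1) := by
    rw [← Nat.cast_add_one, ← Nat.cast_mul, ← cnt_mul hp]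
    exact_mod_cast cnt_mono p (Nat.lt_mul_div_succ N hK).le
  have h3 : ((N / K : ℕ) : ℝ) ≤ N / K := Nat.cast_div_le
  have h4 : (N : ℝ) / K ≤ (N / K : ℕ) + 1 := by
    rw [div_le_iff₀ hK', mul_comm]
    exact_mod_cast (Nat.lt_mul_div_succ N hK).le
  have h5 : (cnt p N : ℝ) / N - cnt p K / K = (cnt p N - cnt p K * (N / K)) / N := by
    field_simp
  rw [Real.dist_eq, h5, abs_div, abs_of_pos hN']
  gcongr
  rw [abs_le]
  constructor <;> nlinarith [mul_le_mul_of_nonneg_left h3 hD, mul_le_mul_of_nonneg_left h4 hD]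

/-- Chinese remainder theorem, as independence of conditions with coprime periods. -/
lemma cnt_crt {G H : ℕ → Prop} {K q : ℕ} (hK : 0 < K) (hq : 0 < q) (hKq : Nat.Coprime K q)
    (hG : Function.Periodic G K) (hH : Function.Periodic H q) :
    cnt (fun n => G n ∧ H n) (K * q) = cnt G K * cnt H q := by
  classical
  have hG' : Function.Periodic G (K * q) := by
    have := hG.nat_mul q
    rwa [Nat.cast_id, mul_comm] at this
  have hH' : Function.Periodic H (K * q) := by
    have := hH.nat_mul K
    rwa [Nat.cast_id] at this
  have hGH : Function.Periodic (fun n => G n ∧ H n) (K * q) := by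
    intro n
    simp only [hG' n, hH' n]
  rw [cnt_period hGH, cnt_period hG, cnt_period hH, ← Finset.card_product]
  refine Finset.card_bij (fun n _ => (n % K, n % q)) ?_ ?_ ?_
  · intro n hn
    simp only [Finset.mem_filter, Finset.mem_range, Finset.mem_product] at hn ⊢
    rw [hG.map_mod_nat, hH.map_mod_nat]
    exact ⟨⟨Nat.mod_lt _ hK, hn.2.1⟩, Nat.mod_lt _ hq, hn.2.2⟩
  · intro m hm n hn h
    simp only [Finset.mem_filter, Finset.mem_range, Prod.mk.injEq] at hm hn h
    have : m ≡ n [MOD K * q] := (Nat.modEq_and_modEq_iff_modEq_mul hKq).1 h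
    exact this.eq_of_lt_of_lt hm.1 hn.1
  · rintro ⟨x, y⟩ hxy
    simp only [Finset.mem_filter, Finset.mem_range, Finset.mem_product] at hxy
    have hz := (Nat.chineseRemainder hKq x y).2
    have hzlt := Nat.chineseRemainder_lt_mul hKq x y hK.ne' hq.ne'
    set z : ℕ := (Nat.chineseRemainder hKq x y).1 with hzdef
    have h1 : z % K = x := by
      have := hz.1
      rwa [Nat.ModEq, Nat.mod_eq_of_lt hxy.1.1] at this
    have h2 : z % q = y := by
      have := hz.2
      rwa [Nat.ModEq, Nat.mod_eq_of_lt hxy.2.1] at this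
    refine ⟨z, ?_, by simp only [h1, h2]⟩
    simp only [Finset.mem_filter, Finset.mem_range]
    refine ⟨hzlt, ?_, ?_⟩
    · rw [← hG.map_mod_nat, h1]
      exact hxy.1.2
    · rw [← hH.map_mod_nat, h2]
      exact hxy.2.2

/-- A set approximated from below by sets with densities, with errors of arbitrarily small upper
density, has as density the limit of these densities. -/
lemma tendsto_cnt_of_approx {E : ℕ → Prop} {F : ℕ → ℕ → Prop} {d : ℕ → ℝ} {L : ℝ}
    (hF : ∀ M, Tendsto (fun N : ℕ => (cnt (F M) N : ℝ) / N) atTop (nhds (d M)))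
    (hd : Tendsto d atTop (nhds L)) (hFE : ∀ M n, 1 ≤ n → F M n → E n)
    (herr : ∀ η : ℝ, 0 < η → ∀ᶠ M in atTop, ∀ᶠ N : ℕ in atTop,
      (cnt (fun n => E n ∧ ¬ F M n) N : ℝ) ≤ η * N) :
    Tendsto (fun N : ℕ => (cnt E N : ℝ) / N) atTop (nhds L) := by
  rw [Metric.tendsto_atTop']
  intro e he
  obtain ⟨M, h1, h2⟩ := ((herr (e / 4) (by positivity)).and
    (Metric.tendsto_nhds.1 hd (e / 4) (by positivity))).exists
  obtain ⟨N0, h3⟩ := eventually_atTop.1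
    ((h1.and (Metric.tendsto_nhds.1 (hF M) (e / 4) (by positivity))).and (eventually_gt_atTop 0))
  refine ⟨N0, fun N hN => ?_⟩
  obtain ⟨⟨h4, h5⟩, h6⟩ := h3 N hN.le
  have hN' : (0 : ℝ) < N := by exact_mod_cast h6
  have h7 : (cnt (F M) N : ℝ) / N ≤ cnt E N / N := by
    gcongr
    exact_mod_cast cnt_imp (hFE M) N
  have h8 : (cnt E N : ℝ) / N ≤ cnt (F M) N / N + e / 4 := by
    rw [div_add' _ _ _ hN'.ne']
    gcongr
    have : cnt E N ≤ cnt (F M) N + cnt (fun n => E n ∧ ¬ F M n) N :=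
      cnt_or (fun n _ h => by tauto) N
    have : (cnt E N : ℝ) ≤ cnt (F M) N + cnt (fun n => E n ∧ ¬ F M n) N := by exact_mod_cast this
    linarith
  rw [Real.dist_eq, abs_lt] at h2 h5 ⊢
  constructor <;> linarith

/-! ### The abundancy index and its truncations -/

/-- The abundancy index `σ(n)/n`, written as the sum of the reciprocals of the divisors of `n`. -/
noncomputable def abund (n : ℕ) : ℝ := ∑ d ∈ n.divisors, (1 : ℝ) / d

lemma abund_eq {n : ℕ} (hn : n ≠ 0) : abund n = (sigma 1 n : ℝ) / n := by
  have hn' : (n : ℝ) ≠ 0 := by exact_mod_cast hn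
  rw [abund, sigma_one_apply, ← Nat.sum_div_divisors n (fun d => d), Nat.cast_sum, Finset.sum_div]
  refine Finset.sum_congr rfl fun d hd => ?_
  have hd' : (d : ℝ) ≠ 0 := by exact_mod_cast (Nat.pos_of_mem_divisors hd).ne'
  rw [Nat.cast_div (Nat.dvd_of_mem_divisors hd) hd']
  field_simp

lemma sigmaRatio_le_iff {n : ℕ} (hn : n ≠ 0) {u : ℝ} (hu : 0 < u) :
    sigmaRatio n ≤ u ↔ u⁻¹ ≤ abund n := by
  have hn' : (0 : ℝ) < n := by exact_mod_cast Nat.pos_of_ne_zero hn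
  have hs : (0 : ℝ) < (sigma 1 n : ℕ) := by
    exact_mod_cast sigma_pos 1 n hn
  rw [abund_eq hn, sigmaRatio, inv_le_comm₀ hu (by positivity), inv_div]

lemma abund_le_of_dvd {m n : ℕ} (hn : n ≠ 0) (h : m ∣ n) : abund m ≤ abund n :=
  Finset.sum_le_sum_of_subset_of_nonneg (Nat.divisors_subset_of_dvd hn h)
    fun _ _ _ => by positivity

lemma abund_prime_mul {p m : ℕ} (hp : p.Prime) (hm : m ≠ 0) (hpm : ¬ p ∣ m) :
    abund (p * m) = (1 + 1 / p) * abund m := by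
  have hp' : (p : ℝ) ≠ 0 := by exact_mod_cast hp.ne_zero
  have hm' : (m : ℝ) ≠ 0 := by exact_mod_cast hm
  rw [abund_eq (mul_ne_zero hp.ne_zero hm), abund_eq hm,
    isMultiplicative_sigma.map_mul_of_coprime ((Nat.Prime.coprime_iff_not_dvd hp).2 hpm)]
  have h : sigma 1 p = 1 + p := by
    have := sigma_one_apply_prime_pow (i := 1) hp
    simpa [Finset.sum_range_succ] using this
  rw [h]
  push_cast
  field_simp
  ring

/-- The product of the integers in `[1, M]` coprime to `q`. -/
def cutoff (q M : ℕ) : ℕ := ∏ d ∈ (Finset.Icc 1 M).filter (fun d => Nat.Coprime d q), d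

lemma cutoff_pos (q M : ℕ) : 0 < cutoff q M := by
  apply Finset.prod_pos
  intro d hd
  simp only [Finset.mem_filter, Finset.mem_Icc] at hd
  omega

lemma cutoff_coprime (q M : ℕ) : Nat.Coprime (cutoff q M) q := by
  apply Nat.Coprime.prod_left
  intro d hd
  exact (Finset.mem_filter.1 hd).2

lemma dvd_cutoff {q M d : ℕ} (h1 : 1 ≤ d) (h2 : d ≤ M) (h3 : Nat.Coprime d q) :
    d ∣ cutoff q M :=
  Finset.dvd_prod_of_mem (fun d => d) 
    (Finset.mem_filter.2 ⟨Finset.mem_Icc.2 ⟨h1, h2⟩, h3⟩)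

lemma cutoff_dvd (q : ℕ) {M M' : ℕ} (h : M ≤ M') : cutoff q M ∣ cutoff q M' :=
  Finset.prod_dvd_prod_of_subset _ _ _
    (Finset.filter_subset_filter _ (Finset.Icc_subset_Icc le_rfl h))

/-- Truncating at `K = cutoff q M` loses only divisors larger than `M`, which are rare on average. -/
lemma sum_abund_sub_le (q M N : ℕ) (hM : 0 < M) :
    ∑ n ∈ (Finset.Icc 1 N).filter (fun n => Nat.Coprime n q),
      (abund n - abund (n.gcd (cutoff q M))) ≤ N / M := by
  have h1 : ∀ n ∈ (Finset.Icc 1 N).filter (fun n => Nat.Coprime n q),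
      abund n - abund (n.gcd (cutoff q M)) ≤
        ∑ d ∈ Finset.Ioc M (M + N), if d ∣ n then (1 : ℝ) / d else 0 := by
    intro n hn
    simp only [Finset.mem_filter, Finset.mem_Icc] at hn
    have hn0 : n ≠ 0 := by omega
    rw [← Finset.sum_filter, sub_le_iff_le_add, abund, abund]
    have hsub : n.divisors ⊆
        (Finset.Ioc M (M + N)).filter (fun d => d ∣ n) ∪ (n.gcd (cutoff q M)).divisors := by
      intro d hd
      have hdn := Nat.dvd_of_mem_divisors hd
      have hd0 := Nat.pos_of_mem_divisors hd
      have hdle := Nat.le_of_dvd (by omega) hdn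
      simp only [Finset.mem_union, Finset.mem_filter, Finset.mem_Ioc, Nat.mem_divisors]
      by_cases hdM : d ≤ M
      · exact Or.inr ⟨Nat.dvd_gcd hdn (dvd_cutoff hd0 hdM (hn.2.coprime_dvd_left hdn)),
          Nat.gcd_ne_zero_left hn0⟩
      · exact Or.inl ⟨by omega, hdn⟩
    refine (Finset.sum_le_sum_of_subset_of_nonneg hsub fun _ _ _ => by positivity).trans ?_
    rw [← Finset.sum_union_inter]
    exact le_add_of_nonneg_right (Finset.sum_nonneg fun _ _ => by positivity)
  calc _ ≤ ∑ n ∈ (Finset.Icc 1 N).filter (fun n => Nat.Coprime n q),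
        ∑ d ∈ Finset.Ioc M (M + N), (if d ∣ n then (1 : ℝ) / d else 0) := Finset.sum_le_sum h1
    _ ≤ ∑ n ∈ Finset.Ioc 0 N,
        ∑ d ∈ Finset.Ioc M (M + N), (if d ∣ n then (1 : ℝ) / d else 0) := by
      apply Finset.sum_le_sum_of_subset_of_nonneg
      · intro n hn
        simp only [Finset.mem_filter, Finset.mem_Icc, Finset.mem_Ioc] at hn ⊢
        omega
      · intro n _ _
        exact Finset.sum_nonneg fun d _ => by split_ifs <;> positivity
    _ = ∑ d ∈ Finset.Ioc M (M + N), ((N / d : ℕ) : ℝ) * (1 / d) := by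
      rw [Finset.sum_comm]
      refine Finset.sum_congr rfl fun d _ => ?_
      rw [← Finset.sum_filter, Finset.sum_const, Nat.Ioc_filter_dvd_card_eq_div, nsmul_eq_mul]
    _ ≤ ∑ d ∈ Finset.Ioc M (M + N), (N : ℝ) * ((d : ℝ) ^ 2)⁻¹ := by
      refine Finset.sum_le_sum fun d hd => ?_
      have : ((N / d : ℕ) : ℝ) ≤ N / d := Nat.cast_div_le
      calc ((N / d : ℕ) : ℝ) * (1 / d) ≤ (N / d) * (1 / d) := by gcongr
        _ = _ := by rw [pow_two, mul_inv]; ring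
    _ ≤ N * (M : ℝ)⁻¹ := by
      rw [← Finset.mul_sum]
      gcongr
      refine (sum_Ioc_inv_sq_le_sub (α := ℝ) hM.ne' (Nat.le_add_right M N)).trans ?_
      exact sub_le_self _ (by positivity)
    _ = N / M := by rw [div_eq_mul_inv]

/-- The sum of the reciprocals of the primes not dividing `q` diverges. -/
lemma exists_prime_sum_ge (q : ℕ) (hq : 0 < q) (C : ℝ) :
    ∃ Y, C ≤ ∑ p ∈ (Finset.range Y).filter (fun p => p.Prime ∧ ¬ p ∣ q), (1 : ℝ) / p := by
  set g : ℕ → ℝ := fun p => if p.Prime ∧ ¬ p ∣ q then (1 : ℝ) / p else 0 with hg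
  have hg0 : ∀ n, 0 ≤ g n := fun n => by simp only [hg]; split_ifs <;> positivity
  have hns : ¬ Summable g := by
    intro hs
    apply not_summable_one_div_on_primes
    refine (hs.add (summable_of_ne_finset_zero (s := Finset.range (q + 1))
      (f := fun p => if p.Prime ∧ p ∣ q then (1 : ℝ) / p else 0) ?_)).congr fun p => ?_
    · intro p hp
      rw [if_neg]
      rintro ⟨_, h⟩
      exact hp (Finset.mem_range.2 (Nat.lt_succ_of_le (Nat.le_of_dvd hq h)))
    · by_cases h1 : p.Prime <;> by_cases h2 : p ∣ q <;> simp [hg, h1, h2]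
  obtain ⟨Y, hY⟩ := (((not_summable_iff_tendsto_nat_atTop_of_nonneg hg0).1 hns).eventually_ge_atTop
    C).exists
  exact ⟨Y, by rwa [Finset.sum_filter]⟩

lemma le_abund_cutoff (q Y : ℕ) :
    ∑ p ∈ (Finset.range Y).filter (fun p => p.Prime ∧ ¬ p ∣ q), (1 : ℝ) / p ≤
      abund (cutoff q Y) := by
  apply Finset.sum_le_sum_of_subset_of_nonneg
  · intro p hp
    simp only [Finset.mem_filter, Finset.mem_range] at hp
    rw [Nat.mem_divisors]
    exact ⟨dvd_cutoff hp.2.1.one_lt.le hp.1.le ((Nat.Prime.coprime_iff_not_dvd hp.2.1).2 hp.2.2),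
      (cutoff_pos q Y).ne'⟩
  · intros
    positivity

/-! ### The truncation error -/

lemma periodic_gcd (K : ℕ) (Q : ℕ → Prop) : Function.Periodic (fun n => Q (n.gcd K)) K := by
  intro n
  simp

lemma gcd_prime_mul {p n K : ℕ} (hp : p.Prime) (hpK : p ∣ K) (hpn : ¬ p ∣ n) :
    (p * n).gcd K = p * n.gcd K := by
  obtain ⟨k, rfl⟩ := hpK
  rw [Nat.gcd_mul_left, Nat.Coprime.gcd_mul_left_cancel_right]
  exact (Nat.Prime.coprime_iff_not_dvd hp).2 hpn

/-- In a narrow enough multiplicative band below `t`, two values cannot be brought together by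
distinct factors `1 + 1/p`, `1 + 1/p'` with `p < p' ≤ Y`. -/
lemma band_separation {p p' Y : ℕ} {t e x x' : ℝ} (hp : 0 < p) (hpp : p < p') (hY : p' ≤ Y)
    (ht : 0 < t) (he : e ≤ t / (Y : ℝ) ^ 2) (hx : t - e ≤ x) (hx' : x' < t) :
    (1 + 1 / (p' : ℝ)) * x' < (1 + 1 / (p : ℝ)) * x := by
  have h1 : (0 : ℝ) < p := by exact_mod_cast hp
  have h2 : (p : ℝ) + 1 ≤ p' := by exact_mod_cast hpp
  have h3 : (p' : ℝ) ≤ Y := by exact_mod_cast hY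
  have h4 : (0 : ℝ) < Y := by linarith
  have h0 : (0 : ℝ) < p' := by linarith
  have h5 : (1 + 1 / (p' : ℝ)) * x' < (1 + 1 / (p' : ℝ)) * t := by gcongr
  have h6 : (1 + 1 / (p : ℝ)) * (t - t / (Y : ℝ) ^ 2) ≤ (1 + 1 / (p : ℝ)) * x := by
    gcongr
    linarith
  refine h5.trans_le (le_trans ?_ h6)
  have h7 : (p' : ℝ) * (p + 1) ≤ (p' - p) * (Y : ℝ) ^ 2 := by nlinarith
  have h8 : (1 + 1 / (p : ℝ)) * (t - t / (Y : ℝ) ^ 2) - (1 + 1 / (p' : ℝ)) * t =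
      t * ((p' - p) * (Y : ℝ) ^ 2 - p' * (p + 1)) / (p * p' * (Y : ℝ) ^ 2) := by
    field_simp
    ring
  have h9 : 0 ≤ t * ((p' - p) * (Y : ℝ) ^ 2 - p' * (p + 1)) / (p * p' * (Y : ℝ) ^ 2) := by
    apply div_nonneg
    · exact mul_nonneg ht.le (by linarith)
    · positivity
  linarith

/-- The truncated abundancy rarely falls in a narrow band `[t - e, t)`. Multiplying an element `n`
of the band by a prime `p ∤ n` from `P` produces each integer at most once, by `band_separation`;
as `p` runs over `P`, the products would exceed the available integers if the band were dense. -/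
lemma band_density {P : Finset ℕ} {K Y : ℕ} {t e : ℝ} (hK : 0 < K) (hY : 0 < Y)
    (hP : ∀ p ∈ P, p.Prime ∧ p ∣ K ∧ p ≤ Y) (ht : 0 < t) (he : e ≤ t / (Y : ℝ) ^ 2) :
    (cnt (fun n => t - e ≤ abund (n.gcd K) ∧ abund (n.gcd K) < t) K : ℝ) / K *
      ∑ p ∈ P, (1 : ℝ) / p ≤ 2 := by
  classical
  set S : ℕ → Prop := fun n => t - e ≤ abund (n.gcd K) ∧ abund (n.gcd K) < t with hS
  have hSper : Function.Periodic S K :=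
    periodic_gcd K (fun m => t - e ≤ abund m ∧ abund m < t)
  have hK' : (0 : ℝ) < K := by exact_mod_cast hK
  have hval : ∀ p n : ℕ, p ∈ P → ¬ p ∣ n →
      abund ((p * n).gcd K) = (1 + 1 / p) * abund (n.gcd K) := by
    intro p n hp hpn
    obtain ⟨h1, h2, -⟩ := hP p hp
    rw [gcd_prime_mul h1 h2 hpn, abund_prime_mul h1 (Nat.gcd_pos_of_pos_right _ hK).ne']
    exact fun h => hpn (h.trans (Nat.gcd_dvd_left _ _))
  set A : ℕ → Finset ℕ := fun p =>
    (Finset.Icc 1 (K * (K / p))).filter (fun n => S n ∧ ¬ p ∣ n) with hA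
  have hcard : (P.sigma A).card ≤ K * K := by
    have hmaps : ∀ x ∈ P.sigma A, x.1 * x.2 ∈ Finset.Icc 1 (K * K) := by
      rintro ⟨p, n⟩ hx
      simp only [hA, Finset.mem_sigma, Finset.mem_filter, Finset.mem_Icc] at hx ⊢
      obtain ⟨h1, h2, -⟩ := hP p hx.1
      refine ⟨Nat.mul_pos h1.pos hx.2.1.1, ?_⟩
      calc p * n ≤ p * (K * (K / p)) := Nat.mul_le_mul_left _ hx.2.1.2
        _ = K * (p * (K / p)) := by ring
        _ = K * K := by rw [Nat.mul_div_cancel' h2]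
    refine (Finset.card_le_card_of_injOn (fun x : (_ : ℕ) × ℕ => x.1 * x.2) hmaps ?_).trans
      (by simp)
    rintro ⟨p, n⟩ hx ⟨p', n'⟩ hx' heq
    simp only [hA, Finset.mem_coe, Finset.mem_sigma, Finset.mem_filter] at hx hx' heq
    obtain ⟨hp, -, ⟨hn1, hn2⟩, hpn⟩ := hx
    obtain ⟨hp', -, ⟨hn1', hn2'⟩, hpn'⟩ := hx'
    have hv : (1 + 1 / (p : ℝ)) * abund (n.gcd K) = (1 + 1 / (p' : ℝ)) * abund (n'.gcd K) := by
      rw [← hval p n hp hpn, ← hval p' n' hp' hpn', heq]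
    rcases lt_trichotomy p p' with h | h | h
    · exact absurd hv
        (band_separation (hP p hp).1.pos h (hP p' hp').2.2 ht he hn1 hn2').ne'
    · subst h
      rw [Nat.eq_of_mul_eq_mul_left (hP p hp).1.pos heq]
    · exact absurd hv
        (band_separation (hP p' hp').1.pos h (hP p hp).2.2 ht he hn1' hn2).ne
  have hlow : ∀ p ∈ P, (cnt S K : ℝ) * K * (1 / p) - (K : ℝ) ^ 2 * ((p : ℝ) ^ 2)⁻¹ ≤
      (A p).card := by
    intro p hp
    obtain ⟨h1, h2, -⟩ := hP p hp
    have hp0 : (p : ℝ) ≠ 0 := by exact_mod_cast h1.ne_zero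
    have h3 : cnt S (K * (K / p)) ≤
        cnt (fun n => S n ∧ ¬ p ∣ n) (K * (K / p)) + cnt (fun n => p ∣ n) (K * (K / p)) :=
      cnt_or (fun n _ h => by tauto) _
    have h4 : cnt (fun n => p ∣ n) (K * (K / p)) = K * (K / p) / p := by
      rw [cnt_eq, ← Nat.Ioc_filter_dvd_card_eq_div (K * (K / p)) p]
      rfl
    have h5 : cnt (fun n => S n ∧ ¬ p ∣ n) (K * (K / p)) = (A p).card := cnt_eq _ _
    rw [cnt_mul hSper, h4, h5] at h3
    have h6 : ((K * (K / p) / p : ℕ) : ℝ) ≤ (K : ℝ) ^ 2 * ((p : ℝ) ^ 2)⁻¹ := by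
      refine Nat.cast_div_le.trans (le_of_eq ?_)
      rw [Nat.cast_mul, Nat.cast_div h2 hp0]
      field_simp
    have h7 : (cnt S K : ℝ) * (K / p : ℕ) ≤ (A p).card + ((K * (K / p) / p : ℕ) : ℝ) := by
      exact_mod_cast h3
    rw [Nat.cast_div h2 hp0] at h7
    have h8 : (cnt S K : ℝ) * K * (1 / p) = cnt S K * (K / p) := by ring
    linarith
  have hsq : ∑ p ∈ P, ((p : ℝ) ^ 2)⁻¹ ≤ 1 := by
    have hsub : P ⊆ Finset.Ioc 1 Y := fun p hp =>
      Finset.mem_Ioc.2 ⟨(hP p hp).1.one_lt, (hP p hp).2.2⟩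
    refine (Finset.sum_le_sum_of_subset_of_nonneg hsub fun _ _ _ => by positivity).trans ?_
    refine (sum_Ioc_inv_sq_le_sub (α := ℝ) one_ne_zero hY).trans ?_
    simp
  have hsum := Finset.sum_le_sum hlow
  rw [Finset.sum_sub_distrib, ← Finset.mul_sum, ← Finset.mul_sum, ← Nat.cast_sum,
    ← Finset.card_sigma] at hsum
  have hcard' : ((P.sigma A).card : ℝ) ≤ K * K := by exact_mod_cast hcard
  have hmul : (K : ℝ) ^ 2 * ∑ p ∈ P, ((p : ℝ) ^ 2)⁻¹ ≤ (K : ℝ) ^ 2 * 1 := by gcongr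
  rw [div_mul_eq_mul_div, div_le_iff₀ hK']
  refine le_of_mul_le_mul_right (a := (K : ℝ)) ?_ hK'
  linarith

/-- The integers coprime to `q` whose abundancy reaches `t`, but not after truncation at
`cutoff q M`, have small upper density when `M` is large: their truncated abundancy lies in a
narrow band below `t`, or the truncation is far off. -/
lemma eventually_cnt_error_le (q : ℕ) (hq : 0 < q) {t : ℝ} (ht : 0 < t) {η : ℝ} (hη : 0 < η) :
    ∀ᶠ M in atTop, ∀ᶠ N : ℕ in atTop,
      (cnt (fun n => Nat.Coprime n q ∧ t ≤ abund n ∧ ¬ t ≤ abund (n.gcd (cutoff q M))) N : ℝ) ≤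
        η * N := by
  classical
  obtain ⟨Y, hYsum⟩ := exists_prime_sum_ge q hq (8 / η)
  set P := (Finset.range Y).filter (fun p => p.Prime ∧ ¬ p ∣ q) with hPdef
  have hs : 0 < ∑ p ∈ P, (1 : ℝ) / p := lt_of_lt_of_le (by positivity) hYsum
  have hY : 0 < Y := by
    rcases Nat.eq_zero_or_pos Y with h | h
    · simp [hPdef, h] at hs
    · exact h
  have hY' : (0 : ℝ) < Y := by exact_mod_cast hY
  set e : ℝ := t / (Y : ℝ) ^ 2 with he
  have he0 : 0 < e := by positivity
  obtain ⟨M1, hM1⟩ := exists_nat_ge (2 / (η * e))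
  filter_upwards [eventually_ge_atTop M1, eventually_ge_atTop Y] with M hMM hMY
  have hM : 0 < M := hY.trans_le hMY
  have hM' : (0 : ℝ) < M := by exact_mod_cast hM
  set K := cutoff q M with hK
  have hK0 : 0 < K := cutoff_pos q M
  set S : ℕ → Prop := fun n => t - e ≤ abund (n.gcd K) ∧ abund (n.gcd K) < t with hS
  have hSper : Function.Periodic S K :=
    periodic_gcd K (fun m => t - e ≤ abund m ∧ abund m < t)
  have hdens : (cnt S K : ℝ) / K < η / 2 := by
    have hP : ∀ p ∈ P, p.Prime ∧ p ∣ K ∧ p ≤ Y := by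
      intro p hp
      simp only [hPdef, Finset.mem_filter, Finset.mem_range] at hp
      exact ⟨hp.2.1, dvd_cutoff hp.2.1.one_lt.le (hp.1.le.trans hMY)
        ((Nat.Prime.coprime_iff_not_dvd hp.2.1).2 hp.2.2), hp.1.le⟩
    have h1 := band_density hK0 hY hP ht he.le
    have h2 : (cnt S K : ℝ) / K * (8 / η) ≤ 2 :=
      (mul_le_mul_of_nonneg_left hYsum (by positivity)).trans h1
    rw [mul_div_assoc', div_le_iff₀ hη] at h2
    linarith
  have hfar : ∀ N : ℕ,
      (cnt (fun n => Nat.Coprime n q ∧ e ≤ abund n - abund (n.gcd K)) N : ℝ) ≤ η / 2 * N := by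
    intro N
    have h1 : (cnt (fun n => Nat.Coprime n q ∧ e ≤ abund n - abund (n.gcd K)) N : ℝ) * e ≤
        N / M := by
      refine le_trans ?_ (sum_abund_sub_le q M N hM)
      rw [cnt_eq, ← nsmul_eq_mul, ← Finset.sum_const]
      calc _ ≤ ∑ n ∈ (Finset.Icc 1 N).filter
            (fun n => Nat.Coprime n q ∧ e ≤ abund n - abund (n.gcd K)),
            (abund n - abund (n.gcd K)) :=
            Finset.sum_le_sum fun n hn => (Finset.mem_filter.1 hn).2.2
        _ ≤ _ := by
          apply Finset.sum_le_sum_of_subset_of_nonneg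
          · intro n hn
            simp only [Finset.mem_filter] at hn ⊢
            exact ⟨hn.1, hn.2.1⟩
          · intro n hn _
            have hn0 : n ≠ 0 := by
              simp only [Finset.mem_filter, Finset.mem_Icc] at hn
              omega
            exact sub_nonneg.2 (abund_le_of_dvd hn0 (Nat.gcd_dvd_left _ _))
    have h2 : 2 ≤ M * (η * e) := by
      rw [← div_le_iff₀ (by positivity)]
      exact hM1.trans (by exact_mod_cast hMM)
    rw [le_div_iff₀ hM'] at h1
    have h3 : (0 : ℝ) ≤ N := by positivity
    refine le_of_mul_le_mul_right (a := e * M) ?_ (by positivity)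
    nlinarith
  filter_upwards [(tendsto_cnt hK0 hSper).eventually (eventually_lt_nhds hdens),
    eventually_gt_atTop 0] with N h1 hN
  have hN' : (0 : ℝ) < N := by exact_mod_cast hN
  rw [div_lt_iff₀ hN'] at h1
  have h2 : cnt (fun n => Nat.Coprime n q ∧ t ≤ abund n ∧ ¬ t ≤ abund (n.gcd K)) N ≤
      cnt S N + cnt (fun n => Nat.Coprime n q ∧ e ≤ abund n - abund (n.gcd K)) N := by
    refine cnt_or (fun n _ h => ?_) N
    obtain ⟨h3, h4, h5⟩ := h
    by_cases h6 : t - e ≤ abund (n.gcd K)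
    · exact Or.inl ⟨h6, not_le.1 h5⟩
    · exact Or.inr ⟨h3, by linarith [not_le.1 h6]⟩
  have h3 : (cnt (fun n => Nat.Coprime n q ∧ t ≤ abund n ∧ ¬ t ≤ abund (n.gcd K)) N : ℝ) ≤
      cnt S N + cnt (fun n => Nat.Coprime n q ∧ e ≤ abund n - abund (n.gcd K)) N := by
    exact_mod_cast h2
  linarith [hfar N]

/-! ### Equidistribution -/

lemma cnt_coprime (q : ℕ) : cnt (fun n => Nat.Coprime n q) q = Nat.totient q := by
  have hper : Function.Periodic (fun n => Nat.Coprime n q) q := fun n => by simp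
  rw [cnt_period hper, Nat.totient_eq_card_coprime]
  simp only [Nat.coprime_comm]

lemma cnt_class (q : ℕ) (hq : 0 < q) (a : ℕ) : cnt (fun n => n % q = a % q) q = 1 := by
  have hper : Function.Periodic (fun n => n % q = a % q) q := fun n => by simp
  rw [cnt_period hper, Finset.card_eq_one]
  refine ⟨a % q, ?_⟩
  ext n
  simp only [Finset.mem_filter, Finset.mem_range, Finset.mem_singleton]
  constructor
  · rintro ⟨h1, h2⟩
    rwa [Nat.mod_eq_of_lt h1] at h2
  · rintro rfl
    exact ⟨Nat.mod_lt _ hq, Nat.mod_mod _ _⟩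

/-- If `H` is a `q`-periodic condition implying coprimality to `q`, then imposing `H` together with
`t ≤ σ(n)/n` gives the density `cnt H q / q` times `D`, where `D`, the limit of the densities of the
truncated conditions, does not depend on `H`. -/
lemma tendsto_cnt_abund {q : ℕ} (hq : 0 < q) {t : ℝ} (ht : 0 < t) {D : ℝ}
    (hD : Tendsto (fun M => (cnt (fun n => t ≤ abund (n.gcd (cutoff q M))) (cutoff q M) : ℝ) /
      cutoff q M) atTop (nhds D))
    {H : ℕ → Prop} (hH : Function.Periodic H q) (hHq : ∀ n, H n → Nat.Coprime n q) :
    Tendsto (fun N : ℕ => (cnt (fun n => t ≤ abund n ∧ H n) N : ℝ) / N) atTop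
      (nhds (D * ((cnt H q : ℝ) / q))) := by
  refine tendsto_cnt_of_approx (F := fun M n => t ≤ abund (n.gcd (cutoff q M)) ∧ H n)
    (d := fun M => (cnt (fun n => t ≤ abund (n.gcd (cutoff q M))) (cutoff q M) : ℝ) /
      cutoff q M * ((cnt H q : ℝ) / q)) ?_ (hD.mul_const _) ?_ ?_
  · intro M
    have hK := cutoff_pos q M
    have hG := periodic_gcd (cutoff q M) (fun m => t ≤ abund m)
    have hper : Function.Periodic (fun n => t ≤ abund (n.gcd (cutoff q M)) ∧ H n)
        (cutoff q M * q) := by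
      intro n
      have h1 := hG.nat_mul q n
      have h2 := hH.nat_mul (cutoff q M) n
      simp only [Nat.cast_id] at h1 h2
      rw [mul_comm] at h1
      simp only [h1, h2]
    have := tendsto_cnt (Nat.mul_pos hK hq) hper
    rwa [cnt_crt hK hq (cutoff_coprime q M) hG hH, Nat.cast_mul, Nat.cast_mul,
      mul_div_mul_comm] at this
  · rintro M n hn ⟨h1, h2⟩
    exact ⟨h1.trans (abund_le_of_dvd (by omega) (Nat.gcd_dvd_left _ _)), h2⟩
  · intro η hη
    filter_upwards [eventually_cnt_error_le q hq ht hη] with M hM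
    filter_upwards [hM] with N hN
    refine le_trans ?_ hN
    rw [Nat.cast_le]
    exact cnt_imp (fun n _ h => ⟨hHq n h.1.2, h.1.1, fun h' => h.2 ⟨h', h.1.2⟩⟩) N

/-- The densities of the truncated conditions increase with `M` to a positive limit. -/
lemma exists_limit (q : ℕ) (hq : 0 < q) (t : ℝ) :
    ∃ D : ℝ, 0 < D ∧
      Tendsto (fun M => (cnt (fun n => t ≤ abund (n.gcd (cutoff q M))) (cutoff q M) : ℝ) /
        cutoff q M) atTop (nhds D) := by
  set d : ℕ → ℝ := fun M =>
    (cnt (fun n => t ≤ abund (n.gcd (cutoff q M))) (cutoff q M) : ℝ) / cutoff q M with hd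
  have hlim : ∀ M, Tendsto
      (fun N : ℕ => (cnt (fun n => t ≤ abund (n.gcd (cutoff q M))) N : ℝ) / N) atTop
      (nhds (d M)) :=
    fun M => tendsto_cnt (cutoff_pos q M) (periodic_gcd (cutoff q M) (fun m => t ≤ abund m))
  have hmono : Monotone d := by
    intro M M' h
    refine le_of_tendsto_of_tendsto' (hlim M) (hlim M') fun N => ?_
    gcongr
    exact cnt_imp (fun n hn h1 => h1.trans (abund_le_of_dvd
      (Nat.gcd_ne_zero_left (by omega)) (Nat.gcd_dvd_gcd_of_dvd_right n (cutoff_dvd q h)))) N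
  have hbdd : BddAbove (Set.range d) := by
    refine ⟨1, ?_⟩
    rintro _ ⟨M, rfl⟩
    refine div_le_one_of_le₀ ?_ (by positivity)
    exact_mod_cast cnt_le _ _
  refine ⟨⨆ M, d M, ?_, tendsto_atTop_ciSup hmono hbdd⟩
  -- For large `Y`, the integer `cutoff q Y` itself satisfies the truncated condition.
  obtain ⟨Y, hY⟩ := exists_prime_sum_ge q hq t
  refine lt_of_lt_of_le ?_ (le_ciSup hbdd Y)
  have hK := cutoff_pos q Y
  have hpos : 0 < cnt (fun n => t ≤ abund (n.gcd (cutoff q Y))) (cutoff q Y) := by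
    classical
    rw [cnt_eq, Finset.card_pos]
    refine ⟨cutoff q Y, ?_⟩
    simp only [Finset.mem_filter, Finset.mem_Icc, Nat.gcd_self]
    exact ⟨⟨hK, le_rfl⟩, hY.trans (le_abund_cutoff q Y)⟩
  simp only [hd]
  positivity

theorem equidistributed_coprime_classes (q : ℕ) (hq : 0 < q) (a : ℕ)
    (ha : Nat.gcd a q = 1) (u : ℝ) (hu0 : 0 < u) (hu1 : u ≤ 1) :
    ∃ L : ℝ, 0 < L ∧
      Tendsto (fun N : ℕ =>
          (((Finset.Icc 1 N).filter
              (fun n : ℕ => sigmaRatio n ≤ u ∧ Nat.gcd n q = 1)).card : ℝ) / N)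
        atTop (nhds L) ∧
      Tendsto (fun N : ℕ =>
          (((Finset.Icc 1 N).filter
              (fun n : ℕ => sigmaRatio n ≤ u ∧ Nat.gcd n q = 1 ∧ n % q = a % q)).card : ℝ) / N)
        atTop (nhds (L / Nat.totient q)) := by
  have ht : 0 < u⁻¹ := inv_pos.2 hu0
  obtain ⟨D, hD0, hD⟩ := exists_limit q hq u⁻¹
  have hq' : (0 : ℝ) < q := by exact_mod_cast hq
  have hφ : (0 : ℝ) < Nat.totient q := by exact_mod_cast Nat.totient_pos.2 hq
  have hclass : ∀ n, n % q = a % q → Nat.Coprime n q := by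
    intro n hn
    rw [Nat.Coprime, Nat.ModEq.gcd_eq hn, ha]
  have h1 := tendsto_cnt_abund hq ht hD (H := fun n => Nat.Coprime n q) (fun n => by simp)
    (fun _ h => h)
  have h2 := tendsto_cnt_abund hq ht hD (H := fun n => n % q = a % q) (fun n => by simp) hclass
  rw [cnt_coprime] at h1
  rw [cnt_class q hq, Nat.cast_one] at h2
  refine ⟨D * (Nat.totient q / q), by positivity, ?_, ?_⟩
  · refine h1.congr fun N => ?_
    classical
    rw [cnt_eq]
    congr 3
    refine Finset.filter_congr fun n hn => ?_
    rw [sigmaRatio_le_iff (by have := (Finset.mem_Icc.1 hn).1; omega) hu0]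
  · have hL : D * (Nat.totient q / q) / Nat.totient q = D * (1 / q) := by field_simp
    rw [hL]
    refine h2.congr fun N => ?_
    classical
    rw [cnt_eq]
    congr 3
    refine Finset.filter_congr fun n hn => ?_
    rw [sigmaRatio_le_iff (by have := (Finset.mem_Icc.1 hn).1; omega) hu0]
    exact ⟨fun h => ⟨h.1, hclass n h.2, h.2⟩, fun h => ⟨h.1, h.2.2⟩⟩
end

section
/- For all u ∈ [0,1], the limit D̃(u) := lim_{R→∞} (1/(πR)) · #{(x,y) ∈ ℤ² : 0 < x² + y² ≤ R and (x²+y²)/σ(x²+y²) ≤ u} exists, and D̃(u) is both continuous and strictly increasing on [0,1]. -/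
/-!
Points `(x, y)` are read as Gaussian integers `z = x + iy`, and `r(z) = n / σ(n)` with
`n = x ^ 2 + y ^ 2` the norm of `z`. With `M = (m!) ^ m`, the truncation `n / σ(n)` evaluated at
`gcd(n, M)` instead of `n` is periodic in `z` modulo `M`, so its sublevel sets have densities by the
Gauss circle problem (`circle`, `periodic_dens`). It is at least `r(z)`, and by `sigmaRatio_ge` it
exceeds `r(z)` by a relative amount of at most `∑ 1 / p` over the primes `p > m` dividing `n`, plus
a small constant. This sum is small on average for large `m` (`sum_tail_le`).

To compare sublevel sets one also needs that few `z` have their truncated ratio in a short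
multiplicative interval, uniformly in `m` (`anticoncentration`). For a Gaussian prime `π_p` of norm
`p ≡ 1 mod 4`, the map `z ↦ π_p z` multiplies the truncated ratio by `p / (p + 1)` when `p` does
not divide the norm of `z`. If the interval is short, the images of the set in question for the
different `p` below a bound are disjoint, and they have relative densities about `1 / p`. As
`∑ 1 / p` diverges over `p ≡ 1 mod 4` (`not_summable_primes`), the density of the set is small. This
makes the counting ratios Cauchy and their limit continuous at each `u > 0`; near `0`, a small
ratio forces a large contribution of the primes `p > m`.

For strict monotonicity, divergence of `∑ 1 / p` provides a `z₀` with `r(z₀)` in any given interval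
`(u₁, u₂]`. For `w` in the periodic set of elements with norm free of primes up to `m`, one has
`r(z₀ w) = r(z₀) r(w)`, and `r(w)` is close to `1` for most such `w`. Hence `(u₁, u₂]` is hit with
positive lower density (`freq_sub_ge`).
-/

open Filter ArithmeticFunction

namespace DavTwo

/-! ### Counting Gaussian integers by norm -/

/-- The norm `x ^ 2 + y ^ 2` of a Gaussian integer `x + iy`, as a natural number. -/
def nrm (z : GaussianInt) : ℕ := z.norm.natAbs

lemma nrm_mul (z w : GaussianInt) : nrm (z * w) = nrm z * nrm w := by
  simp [nrm, Zsqrtd.norm_mul, Int.natAbs_mul]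

lemma nrm_eq_zero {z : GaussianInt} : nrm z = 0 ↔ z = 0 := by
  simp [nrm]

lemma nrm_pos {z : GaussianInt} : 0 < nrm z ↔ z ≠ 0 := by
  rw [Nat.pos_iff_ne_zero, Ne, nrm_eq_zero]

lemma nrm_star (z : GaussianInt) : nrm (star z) = nrm z := by
  simp [nrm, Zsqrtd.norm_conj]

lemma nrm_int (z : GaussianInt) : (nrm z : ℤ) = z.re ^ 2 + z.im ^ 2 := by
  rw [nrm, GaussianInt.abs_natCast_norm, Zsqrtd.norm_def]; ring

lemma nrm_real (z : GaussianInt) : (nrm z : ℝ) = (z.re : ℝ) ^ 2 + (z.im : ℝ) ^ 2 := by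
  exact_mod_cast congrArg (Int.cast (R := ℝ)) (nrm_int z)

/-- A box of side about `2 √R` containing the disc of squared radius `R`. -/
lemma mem_box {R : ℝ} {z : GaussianInt} (h : (nrm z : ℝ) ≤ R) :
    (z.re, z.im) ∈ Finset.Icc (-(Nat.floor √R : ℤ)) (Nat.floor √R) ×ˢ
      Finset.Icc (-(Nat.floor √R : ℤ)) (Nat.floor √R) := by
  have key : ∀ a : ℤ, (a : ℝ) ^ 2 ≤ R → a ∈ Finset.Icc (-(Nat.floor √R : ℤ)) (Nat.floor √R) := by
    intro a ha
    have h1 : |(a : ℝ)| ≤ √R := Real.abs_le_sqrt ha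
    have h2 : a.natAbs ≤ Nat.floor √R := by
      apply Nat.le_floor
      rwa [Nat.cast_natAbs, Int.cast_abs]
    rw [Finset.mem_Icc]
    omega
  rw [nrm_real] at h
  rw [Finset.mem_product]
  exact ⟨key _ (by nlinarith [sq_nonneg (z.im : ℝ)]), key _ (by nlinarith [sq_nonneg (z.re : ℝ)])⟩

lemma inj_pair : Function.Injective (fun z : GaussianInt => (z.re, z.im)) := by
  intro a b h
  simp only [Prod.mk.injEq] at h
  exact Zsqrtd.ext h.1 h.2

lemma disc_finite (R : ℝ) : {z : GaussianInt | z ≠ 0 ∧ (nrm z : ℝ) ≤ R}.Finite :=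
  Set.Finite.of_finite_image
    ((Finset.finite_toSet (Finset.Icc (-(Nat.floor √R : ℤ)) (Nat.floor √R) ×ˢ
      Finset.Icc (-(Nat.floor √R : ℤ)) (Nat.floor √R))).subset (by
        rintro _ ⟨z, hz, rfl⟩
        exact mem_box hz.2)) inj_pair.injOn

/-- The nonzero Gaussian integers of norm at most `R`. -/
noncomputable def disc (R : ℝ) : Finset GaussianInt := (disc_finite R).toFinset

lemma mem_disc {R : ℝ} {z : GaussianInt} : z ∈ disc R ↔ z ≠ 0 ∧ (nrm z : ℝ) ≤ R := by
  simp [disc]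

open Classical in
/-- The nonzero elements of `A` of norm at most `R`. -/
noncomputable def fil (A : Set GaussianInt) (R : ℝ) : Finset GaussianInt :=
  (disc R).filter (· ∈ A)

lemma mem_fil {A : Set GaussianInt} {R : ℝ} {z : GaussianInt} :
    z ∈ fil A R ↔ (z ≠ 0 ∧ (nrm z : ℝ) ≤ R) ∧ z ∈ A := by
  simp [fil, mem_disc]

/-- The number of nonzero elements of `A` of norm at most `R`. -/
noncomputable def cnt (A : Set GaussianInt) (R : ℝ) : ℝ := (fil A R).card

lemma cnt_nonneg (A : Set GaussianInt) (R : ℝ) : 0 ≤ cnt A R := Nat.cast_nonneg _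

lemma cnt_mono_ne {A B : Set GaussianInt} (h : ∀ z, z ≠ 0 → z ∈ A → z ∈ B) (R : ℝ) :
    cnt A R ≤ cnt B R := by
  classical
  unfold cnt
  exact_mod_cast Finset.card_le_card (fun z hz => by
    rw [mem_fil] at hz ⊢
    exact ⟨hz.1, h z hz.1.1 hz.2⟩)

lemma cnt_mono {A B : Set GaussianInt} (h : A ⊆ B) (R : ℝ) : cnt A R ≤ cnt B R :=
  cnt_mono_ne (fun _ _ hz => h hz) R

lemma cnt_congr_ne {A B : Set GaussianInt} (h : ∀ z, z ≠ 0 → (z ∈ A ↔ z ∈ B)) (R : ℝ) :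
    cnt A R = cnt B R :=
  le_antisymm (cnt_mono_ne (fun z hz => (h z hz).1) R) (cnt_mono_ne (fun z hz => (h z hz).2) R)

lemma cnt_union_le (A B : Set GaussianInt) (R : ℝ) : cnt (A ∪ B) R ≤ cnt A R + cnt B R := by
  classical
  unfold cnt
  have : fil (A ∪ B) R = fil (A) R ∪ fil (B) R := by
    ext z; simp [mem_fil]; tauto
  rw [this]
  exact_mod_cast Finset.card_union_le _ _

lemma cnt_union {A B : Set GaussianInt} (h : Disjoint A B) (R : ℝ) :
    cnt (A ∪ B) R = cnt A R + cnt B R := by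
  classical
  unfold cnt
  have : fil (A ∪ B) R = fil (A) R ∪ fil (B) R := by
    ext z; simp [mem_fil]; tauto
  rw [this, Finset.card_union_of_disjoint, Nat.cast_add]
  rw [Finset.disjoint_left]
  intro z h1 h2
  exact Set.disjoint_left.1 h (mem_fil.1 h1).2 (mem_fil.1 h2).2

lemma cnt_lt_one (A : Set GaussianInt) {R : ℝ} (h : R < 1) : cnt A R = 0 := by
  classical
  unfold cnt
  rw [Nat.cast_eq_zero, Finset.card_eq_zero, Finset.eq_empty_iff_forall_notMem]
  intro z hz
  replace hz := (mem_fil.1 hz).1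
  have : (1 : ℝ) ≤ nrm z := by exact_mod_cast nrm_pos.2 hz.1
  linarith

lemma cnt_le (A : Set GaussianInt) {R : ℝ} (h : 0 ≤ R) : cnt A R ≤ 9 * R := by
  classical
  rcases lt_or_ge R 1 with h1 | h1
  · rw [cnt_lt_one A h1]; positivity
  have h2 : (fil A R).card ≤ (2 * Nat.floor √R + 1) * (2 * Nat.floor √R + 1) := by
    have h4 : (Finset.Icc (-(Nat.floor √R : ℤ)) (Nat.floor √R)).card = 2 * Nat.floor √R + 1 := by
      rw [Int.card_Icc]; omega
    rw [← h4, ← Finset.card_product]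
    exact Finset.card_le_card_of_injOn (fun z => (z.re, z.im))
      (fun z hz => mem_box ((mem_fil.1 hz).1).2) inj_pair.injOn
  have h3 : (Nat.floor √R : ℝ) ≤ √R := Nat.floor_le (Real.sqrt_nonneg _)
  have h5 : 1 ≤ √R := Real.one_le_sqrt.2 h1
  have h6 : √R * √R = R := Real.mul_self_sqrt h
  have h7 : (0:ℝ) ≤ Nat.floor √R := Nat.cast_nonneg _
  calc cnt A R ≤ (2 * (Nat.floor √R : ℝ) + 1) * (2 * (Nat.floor √R : ℝ) + 1) := by
        unfold cnt; exact_mod_cast h2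
    _ ≤ (3 * √R) * (3 * √R) := by gcongr <;> linarith
    _ = 9 * R := by rw [mul_mul_mul_comm, h6]; norm_num

/-- Multiplication by `π ≠ 0` scales the norm, so it rescales the counting function exactly. -/
lemma cnt_image (A : Set GaussianInt) {π : GaussianInt} (hπ : π ≠ 0) (R : ℝ) :
    cnt ((fun z => π * z) '' A) R = cnt A (R / nrm π) := by
  classical
  have hp : (0 : ℝ) < nrm π := by exact_mod_cast nrm_pos.2 hπ
  unfold cnt
  rw [← Finset.card_image_of_injective (fil A (R / nrm π)) (mul_right_injective₀ hπ)]
  congr 2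
  ext z
  simp only [mem_fil, Finset.mem_image, Set.mem_image]
  constructor
  · rintro ⟨⟨h1, h2⟩, w, hw, rfl⟩
    refine ⟨w, ⟨⟨right_ne_zero_of_mul h1, ?_⟩, hw⟩, rfl⟩
    rw [nrm_mul, Nat.cast_mul] at h2
    rw [le_div_iff₀ hp]; linarith
  · rintro ⟨w, ⟨⟨h1, h2⟩, hw⟩, rfl⟩
    refine ⟨⟨mul_ne_zero hπ h1, ?_⟩, w, hw, rfl⟩
    rw [le_div_iff₀ hp] at h2
    rw [nrm_mul, Nat.cast_mul]; linarith

lemma sum_cnt_le {ι : Type*} (P : Finset ι) (A : ι → Set GaussianInt)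
    (h : (P : Set ι).PairwiseDisjoint A) (R : ℝ) :
    ∑ i ∈ P, cnt (A i) R ≤ cnt Set.univ R := by
  classical
  unfold cnt
  rw [← Nat.cast_sum, ← Finset.card_biUnion]
  · norm_cast
    apply Finset.card_le_card
    intro z hz
    rw [Finset.mem_biUnion] at hz
    obtain ⟨i, _, hz⟩ := hz
    exact mem_fil.2 ⟨(mem_fil.1 hz).1, Set.mem_univ _⟩
  · intro i hi j hj hij
    rw [Function.onFun, Finset.disjoint_left]
    intro z h1 h2
    exact Set.disjoint_left.1 (h hi hj hij) (mem_fil.1 h1).2 (mem_fil.1 h2).2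

/-- `A` has asymptotic density `d` with respect to the norm ordering: `d R` elements of norm at
most `R`, so that the set of all Gaussian integers has density `π`. -/
def HasDens (A : Set GaussianInt) (d : ℝ) : Prop :=
  Tendsto (fun R : ℝ => cnt A R / R) atTop (nhds d)

/-! ### Densities of periodic sets -/

open scoped Pointwise in
/-- Gauss circle problem, with an unspecified constant. -/
lemma circle : ∃ c : ℝ, 0 < c ∧
    Tendsto (fun x : ℝ => cnt Set.univ (x ^ 2) / x ^ 2) atTop (nhds c) := by
  let s : Set (Fin 2 → ℝ) := {v | v 0 ^ 2 + v 1 ^ 2 ≤ 1}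
  have hball : ∀ v : Fin 2 → ℝ, v ∈ s ↔ v 0 ^ 2 + v 1 ^ 2 ≤ 1 := fun v => Iff.rfl
  have hsub : s ⊆ Set.Icc (fun _ => -1) (fun _ => 1) := by
    intro v hv
    rw [hball] at hv
    rw [Set.mem_Icc, Pi.le_def, Pi.le_def]
    refine ⟨fun i => ?_, fun i => ?_⟩ <;> fin_cases i <;> simp <;>
      nlinarith [sq_nonneg (v 0), sq_nonneg (v 1)]
  have hbdd : Bornology.IsBounded s := (Metric.isBounded_Icc _ _).subset hsub
  have hclosed : IsClosed s := isClosed_le (by fun_prop) continuous_const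
  have hconv : Convex ℝ s := by
    have : ConvexOn ℝ Set.univ (fun v : Fin 2 → ℝ => v 0 ^ 2 + v 1 ^ 2) := by
      refine ConvexOn.add ?_ ?_
      · exact (Even.convexOn_pow (n := 2) even_two).comp_linearMap
          (LinearMap.proj (R := ℝ) (φ := fun _ : Fin 2 => ℝ) 0)
      · exact (Even.convexOn_pow (n := 2) even_two).comp_linearMap
          (LinearMap.proj (R := ℝ) (φ := fun _ : Fin 2 => ℝ) 1)
    simpa using this.convex_le 1
  have hmono : ∀ ⦃x y : ℝ⦄, 0 < x → x ≤ y → x • s ⊆ y • s := by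
    intro x y hx hxy
    have hy : 0 < y := hx.trans_le hxy
    intro v hv
    rw [Set.mem_smul_set_iff_inv_smul_mem₀ hx.ne', hball] at hv
    rw [Set.mem_smul_set_iff_inv_smul_mem₀ hy.ne', hball]
    refine le_trans ?_ hv
    simp only [Pi.smul_apply, smul_eq_mul, mul_pow]
    gcongr
  have hvol : 0 < MeasureTheory.volume.real s := by
    rw [MeasureTheory.measureReal_def]
    refine ENNReal.toReal_pos ?_ hbdd.measure_lt_top.ne
    refine (MeasureTheory.Measure.measure_pos_of_mem_nhds MeasureTheory.volume (x := 0) ?_).ne'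
    have : {v : Fin 2 → ℝ | v 0 ^ 2 + v 1 ^ 2 < 1} ∈ nhds 0 :=
      (isOpen_lt (by fun_prop) continuous_const).mem_nhds (by simp)
    exact Filter.mem_of_superset this (fun v hv => (hball v).2 (le_of_lt hv))
  refine ⟨MeasureTheory.volume.real s, hvol, ?_⟩
  have hmain := tendsto_card_div_pow_atTop_volume' s hbdd hclosed.measurableSet
    (hconv.addHaar_frontier MeasureTheory.volume) hmono
  have hone : Tendsto (fun x : ℝ => 1 / x ^ 2) atTop (nhds 0) := by
    simpa using (tendsto_pow_neg_atTop (𝕜 := ℝ) (n := 2) two_ne_zero)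
  have := hmain.sub hone
  rw [sub_zero] at this
  refine this.congr' ?_
  filter_upwards [eventually_gt_atTop 0] with x hx
  simp only [Fintype.card_fin]
  rw [← sub_div]
  congr 1
  rw [sub_eq_iff_eq_add]
  classical
  have hcard : cnt Set.univ (x ^ 2) + 1 = ((insert 0 (fil Set.univ (x ^ 2))).card : ℝ) := by
    rw [Finset.card_insert_of_notMem (by simp [mem_fil])]
    simp [cnt]
  rw [hcard, Nat.cast_inj, ← Nat.card_eq_finsetCard]
  symm
  have hL : ∀ v : Fin 2 → ℝ, v ∈ Submodule.span ℤ (Set.range (Pi.basisFun ℝ (Fin 2))) ↔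
      ∃ z : GaussianInt, v = ![(z.re : ℝ), (z.im : ℝ)] := by
    intro v
    rw [Module.Basis.mem_span_iff_repr_mem]
    constructor
    · intro h
      obtain ⟨a, ha⟩ := h 0
      obtain ⟨b, hb⟩ := h 1
      refine ⟨⟨a, b⟩, ?_⟩
      ext i
      fin_cases i
      · simpa using ha.symm
      · simpa using hb.symm
    · rintro ⟨z, rfl⟩ i
      fin_cases i
      · exact ⟨z.re, by simp⟩
      · exact ⟨z.im, by simp⟩
  refine Nat.card_congr (Equiv.ofBijective (fun z => ⟨x⁻¹ • ![(z.1.re : ℝ), (z.1.im : ℝ)], ?_, ?_⟩)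
    ⟨?_, ?_⟩)
  · have h1 : (nrm z.1 : ℝ) ≤ x ^ 2 := by
      rcases Finset.mem_insert.1 z.2 with h | h
      · rw [h]; simp [nrm]; positivity
      · exact (mem_fil.1 h).1.2
    rw [nrm_real] at h1
    rw [hball]
    simp only [Pi.smul_apply, smul_eq_mul, mul_pow, Matrix.cons_val_zero, Matrix.cons_val_one]
    rw [← mul_add, inv_pow, inv_mul_le_iff₀ (by positivity)]
    linarith
  · exact Set.smul_mem_smul_set ((hL _).2 ⟨z.1, rfl⟩)
  · intro z w h
    have h1 : x⁻¹ • ![(z.1.re : ℝ), (z.1.im : ℝ)] = x⁻¹ • ![(w.1.re : ℝ), (w.1.im : ℝ)] :=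
      congrArg Subtype.val h
    have h2 := smul_right_injective (Fin 2 → ℝ) (inv_ne_zero hx.ne') h1
    have h3 := congrFun h2 0
    have h4 := congrFun h2 1
    simp only [Matrix.cons_val_zero, Matrix.cons_val_one, Int.cast_inj] at h3 h4
    exact Subtype.ext (Zsqrtd.ext h3 h4)
  · rintro ⟨v, hv1, hv2⟩
    rw [Set.mem_smul_set] at hv2
    obtain ⟨w, hw, rfl⟩ := hv2
    obtain ⟨z, rfl⟩ := (hL w).1 hw
    refine ⟨⟨z, ?_⟩, rfl⟩
    rw [hball] at hv1
    simp only [Pi.smul_apply, smul_eq_mul, mul_pow, Matrix.cons_val_zero, Matrix.cons_val_one] at hv1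
    rw [← mul_add, inv_pow, inv_mul_le_iff₀ (by positivity)] at hv1
    rw [Finset.mem_insert, mem_fil]
    by_cases hz : z = 0
    · exact Or.inl hz
    · right
      refine ⟨⟨hz, ?_⟩, Set.mem_univ _⟩
      rw [nrm_real]; linarith

/-- The length of a Gaussian integer as a vector of the plane. -/
noncomputable def len (z : GaussianInt) : ℝ := ‖GaussianInt.toComplex z‖

lemma len_sq (z : GaussianInt) : len z ^ 2 = nrm z := by
  rw [len, ← Complex.normSq_eq_norm_sq, ← GaussianInt.intCast_real_norm, nrm,
    GaussianInt.natCast_natAbs_norm]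

lemma len_nonneg (z : GaussianInt) : 0 ≤ len z := norm_nonneg _

lemma nrm_le_iff {z : GaussianInt} {x : ℝ} (hx : 0 ≤ x) : (nrm z : ℝ) ≤ x ^ 2 ↔ len z ≤ x := by
  rw [← len_sq, sq_le_sq₀ (len_nonneg z) hx]

/-- The residue class of `a` modulo `M`. -/
def cls (a : GaussianInt) (M : ℕ) : Set GaussianInt := {z | ∃ w, z = a + M * w}

lemma cls_upper (a : GaussianInt) {M : ℕ} (hM : 0 < M) {x : ℝ} (hx : 0 ≤ x) :
    cnt (cls a M) (x ^ 2) ≤ cnt Set.univ (((x + len a) / M) ^ 2) + 1 := by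
  classical
  have hM' : (0 : ℝ) < M := by exact_mod_cast hM
  have h1 : fil (cls a M) (x ^ 2) ⊆
      (insert 0 (fil Set.univ (((x + len a) / M) ^ 2))).image (fun w => a + M * w) := by
    intro z hz
    rw [mem_fil] at hz
    obtain ⟨⟨hz0, hz1⟩, w, rfl⟩ := hz
    refine Finset.mem_image.2 ⟨w, ?_, rfl⟩
    by_cases hw : w = 0
    · simp [hw]
    · refine Finset.mem_insert_of_mem (mem_fil.2 ⟨⟨hw, ?_⟩, Set.mem_univ _⟩)
      rw [nrm_le_iff (div_nonneg (add_nonneg hx (len_nonneg a)) hM'.le), le_div_iff₀ hM']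
      rw [nrm_le_iff hx] at hz1
      calc len w * M = ‖(GaussianInt.toComplex (a + M * w)) - GaussianInt.toComplex a‖ := by
            simp [len, mul_comm]
        _ ≤ len (a + M * w) + len a := norm_sub_le _ _
        _ ≤ x + len a := by linarith
  have h2 := (Finset.card_le_card h1).trans (Finset.card_image_le.trans (Finset.card_insert_le _ _))
  unfold cnt
  exact_mod_cast h2

lemma cls_lower (a : GaussianInt) {M : ℕ} (hM : 0 < M) {x : ℝ} (hx : len a ≤ x) :
    cnt Set.univ (((x - len a) / M) ^ 2) - 1 ≤ cnt (cls a M) (x ^ 2) := by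
  classical
  have hM' : (0 : ℝ) < M := by exact_mod_cast hM
  have h1 : (fil Set.univ (((x - len a) / M) ^ 2)).image (fun w => a + M * w) ⊆
      insert 0 (fil (cls a M) (x ^ 2)) := by
    intro z hz
    rw [Finset.mem_image] at hz
    obtain ⟨w, hw, rfl⟩ := hz
    by_cases h0 : a + M * w = 0
    · simp [h0]
    · refine Finset.mem_insert_of_mem (mem_fil.2 ⟨⟨h0, ?_⟩, w, rfl⟩)
      have hw := (mem_fil.1 hw).1.2
      rw [nrm_le_iff (div_nonneg (sub_nonneg.2 hx) hM'.le), le_div_iff₀ hM'] at hw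
      rw [nrm_le_iff ((len_nonneg a).trans hx)]
      calc len (a + M * w) = ‖GaussianInt.toComplex a + M * GaussianInt.toComplex w‖ := by
            simp [len]
        _ ≤ len a + ‖(M : ℂ) * GaussianInt.toComplex w‖ := norm_add_le _ _
        _ = len a + len w * M := by simp [len, mul_comm]
        _ ≤ x := by linarith
  have h2 := (Finset.card_le_card h1).trans (Finset.card_insert_le _ _)
  rw [Finset.card_image_of_injective] at h2
  · rw [sub_le_iff_le_add]
    unfold cnt
    exact_mod_cast h2
  · intro u v huv
    have : (M : GaussianInt) ≠ 0 := by exact_mod_cast hM.ne'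
    simpa [this] using huv

/-- Every residue class has a positive density: after rescaling, a class is a translate of the full
lattice, and translating changes the radius of the disc by a bounded amount. -/
lemma cls_dens (a : GaussianInt) {M : ℕ} (hM : 0 < M) : ∃ d, 0 < d ∧ HasDens (cls a M) d := by
  obtain ⟨c, hc, hlim⟩ := circle
  have hM' : (0 : ℝ) < M := by exact_mod_cast hM
  refine ⟨c * (1 / (M : ℝ)) ^ 2, by positivity, ?_⟩
  have hone : Tendsto (fun x : ℝ => 1 / x ^ 2) atTop (nhds 0) := by
    simpa using (tendsto_pow_neg_atTop (𝕜 := ℝ) (n := 2) two_ne_zero)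
  have hinv : Tendsto (fun x : ℝ => 1 / x) atTop (nhds 0) := by
    simpa using tendsto_inv_atTop_zero (𝕜 := ℝ)
  -- rescaling by an affine change of the radius
  have key : ∀ b : ℝ, Tendsto (fun x : ℝ => cnt Set.univ (((x + b) / M) ^ 2) / x ^ 2) atTop
      (nhds (c * (1 / (M : ℝ)) ^ 2)) := by
    intro b
    have h1 : Tendsto (fun x : ℝ => (x + b) / M) atTop atTop :=
      (tendsto_atTop_add_const_right _ b tendsto_id).atTop_div_const hM'
    have h2 := hlim.comp h1
    have h3 : Tendsto (fun x : ℝ => ((1 + b * (1 / x)) / M) ^ 2) atTop (nhds ((1 / (M : ℝ)) ^ 2)) := by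
      have := (((hinv.const_mul b).const_add 1).div_const (M : ℝ)).pow 2
      simpa using this
    refine (h2.mul h3).congr' ?_
    filter_upwards [eventually_gt_atTop 0, eventually_gt_atTop (-b)] with x hx hxb
    have : x + b ≠ 0 := by linarith
    simp only [Function.comp]
    field_simp
  have hsq : Tendsto (fun x : ℝ => cnt (cls a M) (x ^ 2) / x ^ 2) atTop
      (nhds (c * (1 / (M : ℝ)) ^ 2)) := by
    have hlo := (key (-len a)).sub hone
    have hup := (key (len a)).add hone
    rw [sub_zero] at hlo
    rw [add_zero] at hup
    refine tendsto_of_tendsto_of_tendsto_of_le_of_le' hlo hup ?_ ?_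
    · filter_upwards [eventually_ge_atTop (len a)] with x hx
      rw [← sub_div]
      gcongr
      exact cls_lower a hM hx
    · filter_upwards [eventually_ge_atTop 0] with x hx
      rw [← add_div]
      gcongr
      exact cls_upper a hM hx
  refine (hsq.comp Real.tendsto_sqrt_atTop).congr' ?_
  filter_upwards [eventually_ge_atTop 0] with R hR
  simp [Real.sq_sqrt hR]

/-- The representative of `z` modulo `M` with coordinates in `[0, M)`. -/
def rep (M : ℕ) (z : GaussianInt) : GaussianInt := ⟨z.re % M, z.im % M⟩

lemma mem_cls_rep (M : ℕ) (z : GaussianInt) : z ∈ cls (rep M z) M := by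
  refine ⟨⟨z.re / M, z.im / M⟩, ?_⟩
  apply Zsqrtd.ext
  · simp [rep, Int.emod_add_mul_ediv]
  · simp [rep, Int.emod_add_mul_ediv]

lemma rep_of_mem_cls {M : ℕ} {a z : GaussianInt} (h : z ∈ cls (rep M a) M) : rep M z = rep M a := by
  obtain ⟨w, rfl⟩ := h
  apply Zsqrtd.ext <;> simp [rep]

lemma periodic_dens {S : Set GaussianInt} {M : ℕ} (hM : 0 < M)
    (hS : ∀ z w, z ∈ S ↔ z + M * w ∈ S) : ∃ d, HasDens S d := by
  classical
  choose d hd0 hd using fun a => cls_dens a hM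
  let T : Finset GaussianInt :=
    ((Finset.range M ×ˢ Finset.range M).image (fun p => (⟨p.1, p.2⟩ : GaussianInt))).filter
      (fun a => a ∈ S ∧ rep M a = a)
  have hsum : ∀ R, cnt S R = ∑ a ∈ T, cnt (cls a M) R := by
    intro R
    have hM' : (0 : ℤ) < M := by exact_mod_cast hM
    have hrr : ∀ z, rep M (rep M z) = rep M z := fun z => by simp [rep]
    have hrS : ∀ z, z ∈ S → rep M z ∈ S := by
      intro z hz
      obtain ⟨w, hw⟩ := mem_cls_rep M z
      rw [hS _ w, ← hw]; exact hz
    have hmaps : ∀ z ∈ fil S R, rep M z ∈ T := by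
      intro z hz
      refine Finset.mem_filter.2 ⟨Finset.mem_image.2
        ⟨((z.re % M).toNat, (z.im % M).toNat), ?_, ?_⟩, hrS z (mem_fil.1 hz).2, hrr z⟩
      · have := Int.emod_lt_of_pos z.re hM'
        have := Int.emod_lt_of_pos z.im hM'
        have := Int.emod_nonneg z.re hM'.ne'
        have := Int.emod_nonneg z.im hM'.ne'
        simp only [Finset.mem_product, Finset.mem_range]
        omega
      · have h1 := Int.emod_nonneg z.re hM'.ne'
        have h2 := Int.emod_nonneg z.im hM'.ne'
        apply Zsqrtd.ext
        · simpa [rep] using h1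
        · simpa [rep] using h2
    unfold cnt
    rw [Finset.card_eq_sum_card_fiberwise hmaps, Nat.cast_sum]
    refine Finset.sum_congr rfl fun a ha => ?_
    obtain ⟨-, haS, har⟩ := Finset.mem_filter.1 ha
    congr 2
    ext z
    rw [Finset.mem_filter, mem_fil, mem_fil]
    constructor
    · rintro ⟨⟨h1, -⟩, rfl⟩
      exact ⟨h1, mem_cls_rep M z⟩
    · rintro ⟨h1, h2⟩
      refine ⟨⟨h1, ?_⟩, ?_⟩
      · obtain ⟨w, rfl⟩ := h2
        exact (hS _ _).1 haS
      · rw [← har] at h2 ⊢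
        exact rep_of_mem_cls h2
  refine ⟨∑ a ∈ T, d a, ?_⟩
  unfold HasDens
  simp_rw [hsum, Finset.sum_div]
  exact tendsto_finsetSum _ fun a _ => hd a

lemma periodic_dens_pos {S : Set GaussianInt} {M : ℕ} (hM : 0 < M)
    (hS : ∀ z w, z ∈ S ↔ z + M * w ∈ S) (hne : S.Nonempty) : ∃ d, 0 < d ∧ HasDens S d := by
  obtain ⟨d, hd⟩ := periodic_dens hM hS
  obtain ⟨a, ha⟩ := hne
  obtain ⟨c, hc0, hc⟩ := cls_dens a hM
  refine ⟨d, hc0.trans_le (le_of_tendsto_of_tendsto hc hd ?_), hd⟩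
  filter_upwards [eventually_gt_atTop 0] with R hR
  gcongr
  refine cnt_mono ?_ R
  rintro _ ⟨w, rfl⟩
  exact (hS _ _).1 ha

/-! ### The ratio `n / σ(n)` and its truncations -/

lemma sigma_pos' {n : ℕ} (hn : 0 < n) : (0 : ℝ) < (sigma 1 n : ℕ) := by
  have : n ≤ sigma 1 n := by
    rw [sigma_one_apply]
    exact Finset.single_le_sum (f := fun d => d) (fun _ _ => Nat.zero_le _)
      (Nat.mem_divisors_self n hn.ne')
  exact_mod_cast hn.trans_le this

lemma sigmaRatio_pos {n : ℕ} (hn : 0 < n) : 0 < sigmaRatio n :=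
  div_pos (by exact_mod_cast hn) (sigma_pos' hn)

lemma sigmaRatio_mul {m n : ℕ} (h : m.Coprime n) :
    sigmaRatio (m * n) = sigmaRatio m * sigmaRatio n := by
  unfold sigmaRatio
  rw [isMultiplicative_sigma.map_mul_of_coprime h]
  push_cast
  rw [mul_div_mul_comm]

lemma sigmaRatio_prime {p : ℕ} (hp : p.Prime) : sigmaRatio p = p / (p + 1) := by
  unfold sigmaRatio
  rw [sigma_one_apply, hp.sum_divisors]
  push_cast
  rw [add_comm]

lemma sigmaRatio_one : sigmaRatio 1 = 1 := by simp [sigmaRatio]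

/-- The sum `∑_{d ∣ n} 1 / d`, which for `n > 0` is `σ(n) / n`. -/
noncomputable def recipSum (n : ℕ) : ℝ := ∑ d ∈ n.divisors, (1 / d : ℝ)

lemma sigmaRatio_eq {n : ℕ} (hn : 0 < n) : sigmaRatio n = (recipSum n)⁻¹ := by
  have hn' : (n : ℝ) ≠ 0 := by exact_mod_cast hn.ne'
  have : recipSum n = (sigma 1 n : ℕ) / (n : ℝ) := by
    rw [recipSum, ← Nat.sum_div_divisors n (fun d => (1 / d : ℝ)), sigma_one_apply, Nat.cast_sum,
      Finset.sum_div]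
    refine Finset.sum_congr rfl fun d hd => ?_
    have hd0 : (d : ℝ) ≠ 0 := by exact_mod_cast (Nat.pos_of_mem_divisors hd).ne'
    rw [Nat.cast_div (Nat.dvd_of_mem_divisors hd) hd0]
    field_simp
  rw [this, inv_div, sigmaRatio]

lemma recipSum_pos {n : ℕ} (hn : 0 < n) : 0 < recipSum n := by
  have := sigmaRatio_pos hn
  rw [sigmaRatio_eq hn] at this
  exact inv_pos.1 this

lemma recipSum_mono {a b : ℕ} (h : a ∣ b) (hb : 0 < b) : recipSum a ≤ recipSum b :=
  Finset.sum_le_sum_of_subset_of_nonneg (Nat.divisors_subset_of_dvd hb.ne' h)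
    (fun _ _ _ => by positivity)

lemma sigmaRatio_anti {a b : ℕ} (h : a ∣ b) (hb : 0 < b) : sigmaRatio b ≤ sigmaRatio a := by
  have ha := Nat.pos_of_dvd_of_pos h hb
  rw [sigmaRatio_eq ha, sigmaRatio_eq hb]
  exact inv_anti₀ (recipSum_pos ha) (recipSum_mono h hb)

lemma sigmaRatio_le_one {n : ℕ} (hn : 0 < n) : sigmaRatio n ≤ 1 := by
  rw [← sigmaRatio_one]
  exact sigmaRatio_anti (one_dvd n) hn

lemma sum_multiples_le {n k : ℕ} (hk : 0 < k) :
    ∑ d ∈ n.divisors with k ∣ d, (1 / d : ℝ) ≤ 1 / k * recipSum n := by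
  have hk' : (k : ℝ) ≠ 0 := by exact_mod_cast hk.ne'
  have hinj : Set.InjOn (fun d => d / k) (n.divisors.filter (k ∣ ·) : Set ℕ) := by
    intro a ha b hb hab
    have ha := (Finset.mem_filter.1 ha).2
    have hb := (Finset.mem_filter.1 hb).2
    rw [← Nat.div_mul_cancel ha, ← Nat.div_mul_cancel hb, show a / k = b / k from hab]
  calc ∑ d ∈ n.divisors with k ∣ d, (1 / d : ℝ)
      = ∑ d ∈ n.divisors with k ∣ d, (1 / k * (1 / (d / k : ℕ)) : ℝ) := by
        refine Finset.sum_congr rfl fun d hd => ?_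
        rw [Nat.cast_div (Finset.mem_filter.1 hd).2 hk']
        field_simp
    _ = ∑ e ∈ (n.divisors.filter (k ∣ ·)).image (fun d => d / k), (1 / k * (1 / e) : ℝ) := by
        rw [Finset.sum_image hinj]
    _ ≤ ∑ e ∈ n.divisors, (1 / k * (1 / e) : ℝ) := by
        refine Finset.sum_le_sum_of_subset_of_nonneg ?_ (fun _ _ _ => by positivity)
        intro e he
        obtain ⟨d, hd, rfl⟩ := Finset.mem_image.1 he
        obtain ⟨hd, hkd⟩ := Finset.mem_filter.1 hd
        rw [Nat.mem_divisors] at hd ⊢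
        exact ⟨(Nat.div_dvd_of_dvd hkd).trans hd.1, hd.2⟩
    _ = 1 / k * recipSum n := by rw [recipSum, Finset.mul_sum]

/-- The modulus `(m!) ^ m` of the `m`-th truncation. -/
def modulus (m : ℕ) : ℕ := m.factorial ^ m

lemma modulus_pos (m : ℕ) : 0 < modulus m := pow_pos (Nat.factorial_pos m) m

lemma prime_dvd_modulus {p m : ℕ} (hp : p.Prime) (h : p ≤ m) : p ∣ modulus m :=
  (hp.dvd_factorial.2 h).trans (dvd_pow_self _ (hp.pos.trans_le h).ne')

lemma exists_of_not_dvd_modulus {m d : ℕ} (hd : 0 < d) (h : ¬ d ∣ modulus m) :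
    (∃ p, p.Prime ∧ m < p ∧ p ∣ d) ∨ ∃ q ∈ Finset.Icc 2 m, q ^ (m + 1) ∣ d := by
  by_contra! hcon
  obtain ⟨h1, h2⟩ := hcon
  apply h
  rw [← Nat.factorization_prime_le_iff_dvd hd.ne' (modulus_pos m).ne']
  intro p hp
  by_cases hpd : p ∣ d
  · have hpm : p ≤ m := by
      by_contra! hlt
      exact h1 p hp hlt hpd
    have h3 : d.factorization p < m + 1 := by
      by_contra! hge
      exact h2 p (Finset.mem_Icc.2 ⟨hp.two_le, hpm⟩)
        ((hp.pow_dvd_iff_le_factorization hd.ne').2 hge)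
    have h4 : 1 ≤ (m.factorial).factorization p :=
      (hp.dvd_iff_one_le_factorization (Nat.factorial_pos m).ne').1 (hp.dvd_factorial.2 hpm)
    rw [modulus, Nat.factorization_pow]
    simp only [Finsupp.smul_apply, smul_eq_mul]
    nlinarith
  · rw [Nat.factorization_eq_zero_of_not_dvd hpd]
    exact Nat.zero_le _

/-- The sum of `1 / p` over the prime divisors `p > m` of `n`. -/
noncomputable def tail (m n : ℕ) : ℝ := ∑ p ∈ n.primeFactors with m < p, (1 / p : ℝ)

/-- Replacing `n` by `gcd(n, M)`, with `M = (m!) ^ m`, drops from `∑_{d ∣ n} 1 / d` only terms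
with `d` divisible by a prime `p > m` or by some `q ^ (m + 1)` with `2 ≤ q ≤ m`. -/
lemma recipSum_sub_le {m n : ℕ} (hn : 0 < n) :
    recipSum n - recipSum (n.gcd (modulus m)) ≤ (tail m n + m / 2 ^ (m + 1)) * recipSum n := by
  classical
  have hs := recipSum_pos hn
  have h1 : recipSum n - recipSum (n.gcd (modulus m)) =
      ∑ d ∈ n.divisors with ¬ d ∣ modulus m, (1 / d : ℝ) := by
    have : (n.gcd (modulus m)).divisors = n.divisors.filter (· ∣ modulus m) := by
      ext d
      simp only [Nat.mem_divisors, Finset.mem_filter, Nat.dvd_gcd_iff]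
      have h0 : n.gcd (modulus m) ≠ 0 := (Nat.gcd_pos_of_pos_left _ hn).ne'
      have h0' : n ≠ 0 := hn.ne'
      tauto
    rw [recipSum, recipSum, this,
      ← Finset.sum_filter_add_sum_filter_not n.divisors (· ∣ modulus m)]
    ring
  rw [h1]
  have h2 : (n.divisors.filter (fun d => ¬ d ∣ modulus m)) ⊆
      ((n.primeFactors.filter (m < ·)).biUnion (fun p => n.divisors.filter (p ∣ ·))) ∪
      ((Finset.Icc 2 m).biUnion (fun q => n.divisors.filter (q ^ (m + 1) ∣ ·))) := by
    intro d hd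
    obtain ⟨hd1, hd2⟩ := Finset.mem_filter.1 hd
    rw [Finset.mem_union, Finset.mem_biUnion, Finset.mem_biUnion]
    rcases exists_of_not_dvd_modulus (Nat.pos_of_mem_divisors hd1) hd2 with
      ⟨p, hp, hmp, hpd⟩ | ⟨q, hq, hqd⟩
    · refine Or.inl ⟨p, Finset.mem_filter.2 ⟨?_, hmp⟩, Finset.mem_filter.2 ⟨hd1, hpd⟩⟩
      exact Nat.mem_primeFactors.2 ⟨hp, hpd.trans (Nat.dvd_of_mem_divisors hd1), hn.ne'⟩
    · exact Or.inr ⟨q, hq, Finset.mem_filter.2 ⟨hd1, hqd⟩⟩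
  have hnn : ∀ d : ℕ, (0 : ℝ) ≤ 1 / d := fun d => by positivity
  have hbi : ∀ (s : Finset ℕ) (t : ℕ → Finset ℕ),
      ∑ d ∈ s.biUnion t, (1 / d : ℝ) ≤ ∑ i ∈ s, ∑ d ∈ t i, (1 / d : ℝ) := by
    intro s t
    induction s using Finset.induction_on with
    | empty => simp
    | insert a s ha ih =>
      rw [Finset.biUnion_insert, Finset.sum_insert ha]
      have := Finset.sum_union_inter (s₁ := t a) (s₂ := s.biUnion t) (f := fun d => (1 / d : ℝ))
      have h0 : 0 ≤ ∑ d ∈ t a ∩ s.biUnion t, (1 / d : ℝ) := Finset.sum_nonneg fun d _ => hnn d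
      linarith
  calc ∑ d ∈ n.divisors with ¬ d ∣ modulus m, (1 / d : ℝ)
      ≤ _ := Finset.sum_le_sum_of_subset_of_nonneg h2 (fun d _ _ => hnn d)
    _ ≤ ∑ d ∈ (n.primeFactors.filter (m < ·)).biUnion (fun p => n.divisors.filter (p ∣ ·)),
          (1 / d : ℝ) + ∑ d ∈ (Finset.Icc 2 m).biUnion
            (fun q => n.divisors.filter (q ^ (m + 1) ∣ ·)), (1 / d : ℝ) := by
        rw [← Finset.sum_union_inter]
        exact le_add_of_nonneg_right (Finset.sum_nonneg fun d _ => hnn d)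
    _ ≤ ∑ p ∈ n.primeFactors with m < p, (1 / p * recipSum n : ℝ) +
          ∑ q ∈ Finset.Icc 2 m, (1 / 2 ^ (m + 1) * recipSum n : ℝ) := by
        refine add_le_add ((hbi _ _).trans ?_) ((hbi _ _).trans ?_)
        · refine Finset.sum_le_sum fun p hp => ?_
          exact sum_multiples_le (Nat.prime_of_mem_primeFactors (Finset.mem_filter.1 hp).1).pos
        · refine Finset.sum_le_sum fun q hq => ?_
          have hq2 : 2 ≤ q := (Finset.mem_Icc.1 hq).1
          refine (sum_multiples_le (pow_pos (by omega) _)).trans ?_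
          have : (2 : ℝ) ≤ q := by exact_mod_cast hq2
          push_cast
          gcongr
    _ ≤ (tail m n + m / 2 ^ (m + 1)) * recipSum n := by
        rw [← Finset.sum_mul, ← Finset.sum_mul, ← add_mul]
        unfold tail
        gcongr
        rw [Finset.sum_const, nsmul_eq_mul, Nat.card_Icc, mul_one_div]
        gcongr
        omega

/-- Up to a relative error controlled by the primes `p > m`, the ratio at `n` is the ratio at
`gcd(n, M)`; the reverse inequality is `sigmaRatio_anti`. -/
lemma sigmaRatio_ge {m n : ℕ} (hn : 0 < n) :
    sigmaRatio (n.gcd (modulus m)) * (1 - (tail m n + m / 2 ^ (m + 1))) ≤ sigmaRatio n := by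
  have hg : 0 < n.gcd (modulus m) := Nat.gcd_pos_of_pos_left _ hn
  have h1 := recipSum_pos hn
  have h2 := recipSum_pos hg
  have h3 := recipSum_sub_le (m := m) hn
  rw [sigmaRatio_eq hn, sigmaRatio_eq hg, ← one_div, ← one_div, one_div_mul_eq_div,
    div_le_div_iff₀ h2 h1]
  linarith

/-- The truncated ratio `g / σ(g)` with `g = gcd(N(z), M)`; it is periodic modulo `M`. -/
noncomputable def trunc (M : ℕ) (z : GaussianInt) : ℝ := sigmaRatio ((nrm z).gcd M)

lemma gcd_periodic (M : ℕ) (z w : GaussianInt) : (nrm (z + M * w)).gcd M = (nrm z).gcd M := by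
  apply Nat.ModEq.gcd_eq
  rw [← Int.natCast_modEq_iff, nrm_int, nrm_int]
  apply Int.ModEq.symm
  rw [Int.modEq_iff_dvd]
  refine ⟨2 * z.re * w.re + M * w.re ^ 2 + 2 * z.im * w.im + M * w.im ^ 2, ?_⟩
  simp
  ring

lemma trunc_mul {M p : ℕ} (hp : p.Prime) (hpM : p ∣ M) {π z : GaussianInt} (hπ : nrm π = p)
    (hz : ¬ p ∣ nrm z) : trunc M (π * z) = p / (p + 1) * trunc M z := by
  have hc : p.Coprime (nrm z) := (Nat.Prime.coprime_iff_not_dvd hp).2 hz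
  rw [trunc, trunc, nrm_mul, hπ, Nat.gcd_comm, Nat.Coprime.gcd_mul M hc, Nat.gcd_eq_right hpM,
    sigmaRatio_mul (Nat.Coprime.coprime_dvd_right (Nat.gcd_dvd_right _ _) hc), sigmaRatio_prime hp,
    Nat.gcd_comm]

/-! ### The contribution of large primes is small on average -/

/-- Divisibility of a norm by a prime `p` is witnessed by divisibility by one of two conjugate
Gaussian integers of norm at least `p`. -/
lemma exists_prime_factor {p : ℕ} (hp : p.Prime) : ∃ π : GaussianInt, π ≠ 0 ∧ p ≤ nrm π ∧
    ∀ z, p ∣ nrm z → π ∣ z ∨ star π ∣ z := by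
  have hnp : nrm (p : GaussianInt) = p ^ 2 := by
    rw [nrm, Zsqrtd.norm_natCast, Int.natAbs_mul, Int.natAbs_natCast, sq]
  have hunit : ∀ z : GaussianInt, IsUnit z ↔ nrm z = 1 := fun z => Zsqrtd.norm_eq_one_iff.symm
  have h1 : ¬ IsUnit (p : GaussianInt) := by
    rw [hunit, hnp]
    have := hp.one_lt
    nlinarith
  have h0 : (p : GaussianInt) ≠ 0 := by exact_mod_cast hp.ne_zero
  obtain ⟨π, hirr, hdvd⟩ := WfDvdMonoid.exists_irreducible_factor h1 h0
  refine ⟨π, hirr.ne_zero, ?_, fun z hz => ?_⟩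
  · have h2 : nrm π ∣ p ^ 2 := by
      obtain ⟨w, hw⟩ := hdvd
      rw [← hnp, hw, nrm_mul]
      exact dvd_mul_right _ _
    obtain ⟨k, -, hk⟩ := (Nat.dvd_prime_pow hp).1 h2
    have h3 : nrm π ≠ 1 := fun h => hirr.not_isUnit ((hunit π).2 h)
    rw [hk]
    refine Nat.le_self_pow ?_ p
    rintro rfl
    exact h3 (by simpa using hk)
  · have h2 : π ∣ z * star z := by
      refine hdvd.trans ?_
      obtain ⟨k, hk⟩ := hz
      have h3 : z * star z = ((nrm z : ℕ) : GaussianInt) := by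
        rw [← Zsqrtd.norm_eq_mul_conj, nrm, ← Int.cast_natCast, GaussianInt.abs_natCast_norm]
      rw [h3, hk]
      exact ⟨k, by push_cast; ring⟩
    rcases hirr.prime.dvd_or_dvd h2 with h | ⟨w, hw⟩
    · exact Or.inl h
    · refine Or.inr ⟨star w, ?_⟩
      rw [← star_star z, hw, star_mul']

lemma cnt_mono_right (A : Set GaussianInt) {R R' : ℝ} (h : R ≤ R') : cnt A R ≤ cnt A R' := by
  unfold cnt
  exact_mod_cast Finset.card_le_card fun z hz => by
    rw [mem_fil] at hz ⊢
    exact ⟨⟨hz.1.1, hz.1.2.trans h⟩, hz.2⟩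

lemma cnt_dvd_le {A : Set GaussianInt} (hA : ∀ v w, v * w ∈ A → w ∈ A) {p : ℕ} (hp : p.Prime)
    {R : ℝ} (hR : 0 ≤ R) : cnt {z | z ∈ A ∧ p ∣ nrm z} R ≤ 2 * cnt A (R / p) := by
  obtain ⟨π, h0, hle, hπ⟩ := exists_prime_factor hp
  have hs0 : star π ≠ 0 := by rwa [Ne, star_eq_zero]
  have hp0 : (0 : ℝ) < p := by exact_mod_cast hp.pos
  have hle' : R / nrm π ≤ R / p := by
    have : (p : ℝ) ≤ nrm π := by exact_mod_cast hle
    gcongr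
  have hsub : {z | z ∈ A ∧ p ∣ nrm z} ⊆
      ((fun z => π * z) '' A) ∪ ((fun z => star π * z) '' A) := by
    rintro z ⟨hzA, hz⟩
    rcases hπ z hz with ⟨w, rfl⟩ | ⟨w, rfl⟩
    · exact Or.inl ⟨w, hA _ _ hzA, rfl⟩
    · exact Or.inr ⟨w, hA _ _ hzA, rfl⟩
  calc _ ≤ _ := cnt_mono hsub R
    _ ≤ _ := cnt_union_le _ _ R
    _ = cnt A (R / nrm π) + cnt A (R / nrm π) := by
        rw [cnt_image A h0, cnt_image A hs0, nrm_star]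
    _ ≤ 2 * cnt A (R / p) := by
        have := cnt_mono_right A hle'
        linarith

lemma tsum_inv_sq_le (m : ℕ) :
    ∑' k : ℕ, (if m < k then ((k : ℝ) ^ 2)⁻¹ else 0) ≤ 2 / (m + 1) := by
  refine Real.tsum_le_of_sum_range_le (fun k => by positivity) fun n => ?_
  rw [← Finset.sum_filter]
  refine le_trans (Finset.sum_le_sum_of_subset_of_nonneg ?_ fun _ _ _ => by positivity)
    (sum_Ioo_inv_sq_le m n)
  intro k hk
  simp only [Finset.mem_filter, Finset.mem_range] at hk
  exact Finset.mem_Ioo.2 ⟨hk.2, hk.1⟩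

open Classical in
/-- The average over `A` of the contribution of the primes `p > m`, for a set `A` closed under
division. -/
lemma sum_tail_le {A : Set GaussianInt} (hA : ∀ v w, v * w ∈ A → w ∈ A) {δ : ℝ} (hδ : 0 < δ)
    (hd : HasDens A δ) (m : ℕ) :
    ∀ᶠ R in atTop, ∑ z ∈ fil A R, tail m (nrm z) ≤ 5 * δ / (m + 1) * R := by
  let f : ℝ → ℕ → ℝ := fun R k => if k.Prime ∧ m < k then 2 / k * (cnt A (R / k) / R) else 0
  let g : ℕ → ℝ := fun k => if k.Prime ∧ m < k then 2 * δ * ((k : ℝ) ^ 2)⁻¹ else 0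
  have hbs : Summable (fun k : ℕ => 18 * ((k : ℝ) ^ 2)⁻¹) :=
    (Real.summable_nat_pow_inv.2 one_lt_two).mul_left 18
  have hf0 : ∀ R, 0 < R → ∀ k, 0 ≤ f R k := by
    intro R hR k
    simp only [f]
    split_ifs
    · have := cnt_nonneg A (R / k)
      positivity
    · exact le_rfl
  have hfb : ∀ R, 0 < R → ∀ k, f R k ≤ 18 * ((k : ℝ) ^ 2)⁻¹ := by
    intro R hR k
    simp only [f]
    split_ifs with h
    · have hk : (0 : ℝ) < k := by exact_mod_cast h.1.pos
      calc 2 / k * (cnt A (R / k) / R) ≤ 2 / k * (9 * (R / k) / R) := by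
            gcongr
            exact cnt_le A (by positivity)
        _ = 18 * ((k : ℝ) ^ 2)⁻¹ := by field_simp; norm_num
    · positivity
  have hlim : Tendsto (fun R => ∑' k, f R k) atTop (nhds (∑' k, g k)) := by
    refine tendsto_tsum_of_dominated_convergence hbs (fun k => ?_) ?_
    · simp only [f, g]
      split_ifs with h
      · have hk : (0 : ℝ) < k := by exact_mod_cast h.1.pos
        have h1 := hd.comp (tendsto_id.atTop_div_const hk)
        have h2 := h1.const_mul (2 / k * (1 / k) : ℝ)
        rw [show 2 / (k : ℝ) * (1 / k) * δ = 2 * δ * ((k : ℝ) ^ 2)⁻¹ by field_simp] at h2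
        refine h2.congr' ?_
        filter_upwards [eventually_gt_atTop 0] with R hR
        simp only [Function.comp, id]
        field_simp
      · exact tendsto_const_nhds
    · filter_upwards [eventually_gt_atTop 0] with R hR k
      rw [Real.norm_of_nonneg (hf0 R hR k)]
      exact hfb R hR k
  have hg : ∑' k, g k ≤ 4 * δ / (m + 1) := by
    have hsm : Summable (fun k : ℕ => if m < k then ((k : ℝ) ^ 2)⁻¹ else 0) :=
      Summable.of_nonneg_of_le (fun k => by positivity)
        (fun k => by split_ifs; exacts [le_rfl, by positivity])
        (Real.summable_nat_pow_inv.2 one_lt_two)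
    have hle : ∀ k, g k ≤ 2 * δ * (if m < k then ((k : ℝ) ^ 2)⁻¹ else 0) := by
      intro k
      simp only [g]
      split_ifs with h1 h2 h2
      · exact le_rfl
      · exact absurd h1.2 h2
      · positivity
      · simp
    have hg0 : ∀ k, 0 ≤ g k := fun k => by simp only [g]; positivity
    have hsg : Summable g := Summable.of_nonneg_of_le hg0 hle (hsm.mul_left _)
    calc ∑' k, g k ≤ ∑' k : ℕ, 2 * δ * (if m < k then ((k : ℝ) ^ 2)⁻¹ else 0) :=
          hsg.tsum_le_tsum hle (hsm.mul_left _)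
      _ = 2 * δ * ∑' k : ℕ, (if m < k then ((k : ℝ) ^ 2)⁻¹ else 0) := tsum_mul_left
      _ ≤ 2 * δ * (2 / (m + 1)) := by
          gcongr
          exact tsum_inv_sq_le m
      _ = 4 * δ / (m + 1) := by ring
  have hlt : ∑' k, g k < 5 * δ / (m + 1) :=
    hg.trans_lt (by gcongr; norm_num)
  filter_upwards [hlim.eventually_lt_const hlt, eventually_gt_atTop 0] with R hR hR0
  let K := (Finset.range (Nat.floor R + 1)).filter (fun k => k.Prime ∧ m < k)
  have hsf : Summable (f R) := Summable.of_nonneg_of_le (hf0 R hR0) (hfb R hR0) hbs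
  calc ∑ z ∈ fil A R, tail m (nrm z)
      = ∑ z ∈ fil A R, ∑ p ∈ K, if p ∣ nrm z then (1 / p : ℝ) else 0 := by
        refine Finset.sum_congr rfl fun z hz => ?_
        rw [tail, ← Finset.sum_filter]
        refine Finset.sum_congr ?_ fun _ _ => rfl
        obtain ⟨⟨hz0, hzR⟩, -⟩ := mem_fil.1 hz
        have hzp := nrm_pos.2 hz0
        ext p
        simp only [Finset.mem_filter, Nat.mem_primeFactors, K, Finset.mem_range]
        constructor
        · rintro ⟨⟨h1, h2, h3⟩, h4⟩
          have : p ≤ Nat.floor R := (Nat.le_of_dvd hzp h2).trans (Nat.le_floor hzR)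
          exact ⟨⟨by omega, h1, h4⟩, h2⟩
        · rintro ⟨⟨h1, h2, h3⟩, h4⟩
          exact ⟨⟨h2, h4, hzp.ne'⟩, h3⟩
    _ = ∑ p ∈ K, 1 / p * cnt {z | z ∈ A ∧ p ∣ nrm z} R := by
        rw [Finset.sum_comm]
        refine Finset.sum_congr rfl fun p _ => ?_
        rw [← Finset.sum_filter, Finset.sum_const, nsmul_eq_mul, mul_comm, cnt]
        congr 3
        ext z
        simp only [Finset.mem_filter, mem_fil, Set.mem_ofPred_eq]
        tauto
    _ ≤ ∑ p ∈ K, f R p * R := by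
        refine Finset.sum_le_sum fun p hp => ?_
        obtain ⟨hp1, hp2⟩ := (Finset.mem_filter.1 hp).2
        have hp0 : (0 : ℝ) < p := by exact_mod_cast hp1.pos
        simp only [f, if_pos (And.intro hp1 hp2)]
        calc 1 / p * cnt {z | z ∈ A ∧ p ∣ nrm z} R ≤ 1 / p * (2 * cnt A (R / p)) := by
              gcongr
              exact cnt_dvd_le hA hp1 hR0.le
          _ = 2 / p * (cnt A (R / p) / R) * R := by field_simp
    _ = (∑ p ∈ K, f R p) * R := by rw [Finset.sum_mul]
    _ ≤ (∑' k, f R k) * R := by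
        gcongr
        exact hsf.sum_le_tsum _ fun k _ => hf0 R hR0 k
    _ ≤ 5 * δ / (m + 1) * R := by gcongr

lemma tail_nonneg (m n : ℕ) : 0 ≤ tail m n := Finset.sum_nonneg fun _ _ => by positivity

/-- Markov's inequality applied to `sum_tail_le`. -/
lemma cnt_tail_le {A : Set GaussianInt} (hA : ∀ v w, v * w ∈ A → w ∈ A) {δ : ℝ} (hδ : 0 < δ)
    (hd : HasDens A δ) (m : ℕ) {η : ℝ} (hη : 0 < η) :
    ∀ᶠ R in atTop, cnt {z | z ∈ A ∧ η < tail m (nrm z)} R ≤ 5 * δ / (η * (m + 1)) * R := by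
  classical
  filter_upwards [sum_tail_le hA hδ hd m] with R hR
  have h1 : cnt {z | z ∈ A ∧ η < tail m (nrm z)} R * η ≤ 5 * δ / (m + 1) * R := by
    refine le_trans ?_ hR
    rw [cnt, ← nsmul_eq_mul, ← Finset.sum_const]
    refine le_trans (Finset.sum_le_sum (g := fun z => tail m (nrm z)) fun z hz => ?_)
      (Finset.sum_le_sum_of_subset_of_nonneg (fun z hz => ?_) fun z _ _ => tail_nonneg m _)
    · exact (mem_fil.1 hz).2.2.le
    · rw [mem_fil] at hz ⊢
      exact ⟨hz.1, hz.2.1⟩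
  rw [← le_div_iff₀ hη] at h1
  refine h1.trans (le_of_eq ?_)
  field_simp

/-! ### Divergence of `∑ 1 / p` over the primes `p ≡ 1 mod 4` -/

open ArithmeticFunction.vonMangoldt in
/-- If the sum converged, then by dominated convergence
`δ ∑ Λ(n) / n ^ (1 + δ)`, over `n ≡ 1 mod 4`, would tend to `0` as `δ → 0⁺`, because
`δ log p ≤ p ^ δ`; but it is bounded below by Dirichlet's theorem. -/
lemma not_summable_primes :
    ¬ Summable (fun p : ℕ => if p.Prime ∧ p % 4 = 1 then (1 / p : ℝ) else 0) := by
  intro H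
  let a : ZMod 4 := 1
  let r : ℕ → ℝ := residueClass a
  obtain ⟨C, hC⟩ := LSeries_residueClass_lower_bound (q := 4) (a := a) isUnit_one
  have hr0 : ∀ n, 0 ≤ r n := residueClass_nonneg a
  have hbound := (summable_residueClass_non_primes_div a).add H
  have hlim : Tendsto (fun δ : ℝ => ∑' n : ℕ, δ * (r n / (n : ℝ) ^ (1 + δ)))
      (nhdsWithin 0 (Set.Ioi 0)) (nhds (∑' _ : ℕ, (0 : ℝ))) := by
    refine tendsto_tsum_of_dominated_convergence hbound (fun n => ?_) ?_
    · refine tendsto_of_tendsto_of_tendsto_of_le_of_le' tendsto_const_nhds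
        (h := fun δ : ℝ => δ * r n) ?_ ?_ ?_
      · have : Tendsto (fun δ : ℝ => δ * r n) (nhds 0) (nhds (0 * r n)) :=
          tendsto_id.mul_const _
        rw [zero_mul] at this
        exact this.mono_left nhdsWithin_le_nhds
      · filter_upwards [self_mem_nhdsWithin] with δ hδ
        have : (0 : ℝ) < δ := hδ
        have := hr0 n
        positivity
      · filter_upwards [self_mem_nhdsWithin] with δ hδ
        have hδ : (0 : ℝ) < δ := hδ
        rcases n.eq_zero_or_pos with rfl | hn
        · have : r 0 = 0 := residueClass_apply_zero a
          simp [this]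
        · have h1 : (1 : ℝ) ≤ n := by exact_mod_cast hn
          gcongr
          exact div_le_self (hr0 n) (Real.one_le_rpow h1 (by linarith))
    · filter_upwards [Ioc_mem_nhdsGT (zero_lt_one (α := ℝ))] with δ hδ n
      obtain ⟨hδ0, hδ1⟩ := hδ
      have hnn : 0 ≤ δ * (r n / (n : ℝ) ^ (1 + δ)) := by
        have := hr0 n
        positivity
      rw [Real.norm_of_nonneg hnn]
      rcases n.eq_zero_or_pos with rfl | hn
      · have : r 0 = 0 := residueClass_apply_zero a
        simp [this]
      have hn1 : (1 : ℝ) ≤ n := by exact_mod_cast hn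
      have hn0 : (0 : ℝ) < n := by linarith
      have hpow : (1 : ℝ) ≤ (n : ℝ) ^ δ := Real.one_le_rpow hn1 hδ0.le
      rw [Real.rpow_add hn0, Real.rpow_one]
      by_cases hp : n.Prime
      · by_cases hm : n % 4 = 1
        · have hrn : r n = Real.log n := by
            have hmem : (n : ZMod 4) = a := by
              have := (ZMod.natCast_eq_natCast_iff n 1 4).2 hm
              simpa using this
            simp only [r, residueClass]
            rw [Set.indicator_of_mem (by exact hmem), vonMangoldt_apply_prime hp]
          have hlog : δ * Real.log n ≤ (n : ℝ) ^ δ := by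
            rw [← Real.log_rpow hn0]
            have := Real.log_le_sub_one_of_pos (Real.rpow_pos_of_pos hn0 δ)
            linarith
          rw [if_pos hp, if_pos ⟨hp, hm⟩, hrn, zero_div, zero_add]
          rw [← mul_div_assoc, div_le_div_iff₀ (by positivity) hn0]
          nlinarith
        · have hrn : r n = 0 := by
            have hmem : ¬ (n : ZMod 4) = a := by
              intro h
              apply hm
              have : ((n : ℕ) : ZMod 4) = ((1 : ℕ) : ZMod 4) := by simpa using h
              exact (ZMod.natCast_eq_natCast_iff n 1 4).1 this
            simp only [r, residueClass]
            rw [Set.indicator_of_notMem (by exact hmem)]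
          simp [hrn, hp, hm]
      · rw [if_neg hp, if_neg (fun h => hp h.1), add_zero]
        have h1 : r n / (n * (n : ℝ) ^ δ) ≤ r n / n := by
          have := hr0 n
          gcongr
          exact le_mul_of_one_le_right hn0.le hpow
        have h2 : 0 ≤ r n / n := div_nonneg (hr0 n) hn0.le
        have h3 : 0 ≤ r n / (n * (n : ℝ) ^ δ) := by
          have := hr0 n
          positivity
        change δ * (r n / (n * (n : ℝ) ^ δ)) ≤ r n / n
        nlinarith
  rw [tsum_zero] at hlim
  have hlow : Tendsto (fun δ : ℝ => ((Nat.totient 4 : ℕ) : ℝ)⁻¹ - C * δ)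
      (nhdsWithin 0 (Set.Ioi 0)) (nhds ((Nat.totient 4 : ℕ) : ℝ)⁻¹) := by
    have : Tendsto (fun δ : ℝ => ((Nat.totient 4 : ℕ) : ℝ)⁻¹ - C * δ) (nhds 0)
        (nhds (((Nat.totient 4 : ℕ) : ℝ)⁻¹ - C * 0)) :=
      tendsto_const_nhds.sub (tendsto_id.const_mul C)
    rw [mul_zero, sub_zero] at this
    exact this.mono_left nhdsWithin_le_nhds
  have hle : ((Nat.totient 4 : ℕ) : ℝ)⁻¹ ≤ 0 := by
    refine le_of_tendsto_of_tendsto hlow hlim ?_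
    filter_upwards [Ioc_mem_nhdsGT (zero_lt_one (α := ℝ))] with δ hδ
    have := hC (x := 1 + δ) ⟨by linarith [hδ.1], by linarith [hδ.2]⟩
    rw [add_sub_cancel_left] at this
    rw [tsum_mul_left]
    have h2 := mul_le_mul_of_nonneg_left this hδ.1.le
    refine le_trans (le_of_eq ?_) h2
    have := hδ.1.ne'
    field_simp
  have hpos : (0 : ℝ) < ((Nat.totient 4 : ℕ) : ℝ)⁻¹ :=
    inv_pos.2 (by exact_mod_cast Nat.totient_pos.2 (by norm_num))
  linarith

/-! ### Truncated ratios do not concentrate -/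

lemma trunc_pos {M : ℕ} (hM : 0 < M) (z : GaussianInt) : 0 < trunc M z :=
  sigmaRatio_pos (Nat.gcd_pos_of_pos_right _ hM)

lemma trunc_periodic (M : ℕ) (z w : GaussianInt) : trunc M (z + M * w) = trunc M z := by
  rw [trunc, trunc, gcd_periodic]

/-- Multiplying by Gaussian primes of norm `p`, for distinct `p`, moves the values of the truncated
ratio by distinct factors `p / (p + 1)`. Hence the preimage of a short multiplicative interval has
many disjoint copies, of relative densities `1 / p`, and as `∑ 1 / p` diverges its density is
small, uniformly in the position of the interval and in the truncation. -/
lemma anticoncentration {δ : ℝ} (hδ : 0 < δ) : ∃ ε : ℝ, 0 < ε ∧ ε < 1 ∧ ∃ m₀ : ℕ, ∀ m ≥ m₀,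
    ∀ u > 0, ∀ d, HasDens {z | u < trunc (modulus m) z ∧ trunc (modulus m) z ≤ u / (1 - ε)} d →
      d ≤ δ := by
  classical
  have hdiv := (not_summable_iff_tendsto_nat_atTop_of_nonneg (fun n => by
    split_ifs <;> positivity)).1 not_summable_primes
  -- Each copy with parameter `p` omits the multiples of `p`, of count at most `18 R / p ^ 2`. As
  -- `∑ 1 / p ^ 2 ≤ 1`, comparison with the total count `9 R` gives `27 = 9 + 18`.
  obtain ⟨N, hN, hN2⟩ := ((hdiv.eventually_gt_atTop (27 / δ)).and (eventually_ge_atTop 2)).exists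
  let P := (Finset.range N).filter (fun p => p.Prime ∧ p % 4 = 1)
  rw [← Finset.sum_filter] at hN
  change 27 / δ < ∑ p ∈ P, (1 / p : ℝ) at hN
  have hP : ∀ p ∈ P, p.Prime ∧ p % 4 = 1 ∧ p < N := fun p hp => by
    simp only [P, Finset.mem_filter, Finset.mem_range] at hp
    exact ⟨hp.2.1, hp.2.2, hp.1⟩
  have hNr : (2 : ℝ) ≤ N := by exact_mod_cast hN2
  have hε1 : 1 / (N : ℝ) ^ 2 < 1 := by
    rw [div_lt_one (by positivity)]
    nlinarith
  -- For `p < q < N` the factors `p / (p + 1)` and `q / (q + 1)` differ by a relative amount of more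
  -- than `1 / N ^ 2`, so the copies are disjoint.
  refine ⟨1 / (N : ℝ) ^ 2, by positivity, hε1, N, fun m hm u hu d hd => ?_⟩
  set G := {z | u < trunc (modulus m) z ∧ trunc (modulus m) z ≤ u / (1 - 1 / (N : ℝ) ^ 2)} with hG
  have hπ : ∀ p : ℕ, ∃ π : GaussianInt, p ∈ P → nrm π = p := by
    intro p
    by_cases hp : p ∈ P
    · obtain ⟨h1, h2, -⟩ := hP p hp
      have := Fact.mk h1
      obtain ⟨a, b, hab⟩ := Nat.Prime.sq_add_sq (p := p) (by omega)
      refine ⟨⟨a, b⟩, fun _ => ?_⟩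
      have := nrm_int ⟨a, b⟩
      simp only at this
      rw [← hab]
      exact_mod_cast this
    · exact ⟨0, fun h => absurd h hp⟩
  choose π hπ using hπ
  have hdisj : ((P : Finset ℕ) : Set ℕ).PairwiseDisjoint
      (fun p => (fun z => π p * z) '' {z | z ∈ G ∧ ¬ p ∣ nrm z}) := by
    have key : ∀ p ∈ P, ∀ q ∈ P, p < q → Disjoint
        ((fun z => π p * z) '' {z | z ∈ G ∧ ¬ p ∣ nrm z})
        ((fun z => π q * z) '' {z | z ∈ G ∧ ¬ q ∣ nrm z}) := by
      intro p hp q hq hpq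
      rw [Set.disjoint_left]
      rintro _ ⟨z, ⟨hz, hzp⟩, rfl⟩ ⟨w, ⟨hw, hwq⟩, hwz⟩
      obtain ⟨hp1, hp2, hp3⟩ := hP p hp
      obtain ⟨hq1, hq2, hq3⟩ := hP q hq
      have h1 := trunc_mul hp1 (prime_dvd_modulus hp1 (hp3.le.trans hm)) (hπ p hp) hzp
      have h2 := trunc_mul hq1 (prime_dvd_modulus hq1 (hq3.le.trans hm)) (hπ q hq) hwq
      simp only at hwz
      rw [hwz, h1] at h2
      have hp0 : (0 : ℝ) < p := by exact_mod_cast hp1.pos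
      have hq0 : (0 : ℝ) < q := by exact_mod_cast hq1.pos
      have hpq' : (p : ℝ) + 1 ≤ q := by exact_mod_cast hpq
      have hqN : (q : ℝ) ≤ N := by exact_mod_cast hq3.le
      have h3 : (p : ℝ) / (p + 1) * (u / (1 - 1 / (N : ℝ) ^ 2)) ≤ q / (q + 1) * u := by
        rw [← mul_div_assoc, div_le_iff₀ (by linarith), div_mul_eq_mul_div, mul_assoc,
          div_mul_eq_mul_div, div_le_div_iff₀ (by positivity) (by positivity)]
        have h4 : (q : ℝ) * (p + 1) * (1 / (N : ℝ) ^ 2) ≤ 1 := by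
          rw [mul_one_div, div_le_one (by positivity)]
          nlinarith
        have h5 : (p : ℝ) * (q + 1) ≤ q * (p + 1) * (1 - 1 / (N : ℝ) ^ 2) := by nlinarith
        nlinarith
      have h6 : (p : ℝ) / (p + 1) * trunc (modulus m) z ≤
          p / (p + 1) * (u / (1 - 1 / (N : ℝ) ^ 2)) := by
        gcongr
        exact hz.2
      have h7 : (q : ℝ) / (q + 1) * u < q / (q + 1) * trunc (modulus m) w := by
        gcongr
        exact hw.1
      linarith
    intro p hp q hq hne
    rcases lt_or_gt_of_ne hne with h | h
    · exact key p hp q hq h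
    · exact (key q hq p hp h).symm
  have hineq : ∀ R : ℝ, 0 < R →
      ∑ p ∈ P, (1 / p * (cnt G (R / p) / (R / p)) - 18 * ((p : ℝ) ^ 2)⁻¹) ≤ 9 := by
    intro R hR
    have h1 := (sum_cnt_le P _ hdisj R).trans (cnt_le Set.univ hR.le)
    have h2 : ∀ p ∈ P, (1 / p * (cnt G (R / p) / (R / p)) - 18 * ((p : ℝ) ^ 2)⁻¹) * R ≤
        cnt ((fun z => π p * z) '' {z | z ∈ G ∧ ¬ p ∣ nrm z}) R := by
      intro p hp
      have hp1 := (hP p hp).1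
      have hp0 : (0 : ℝ) < p := by exact_mod_cast hp1.pos
      have hπ0 : π p ≠ 0 := by
        rw [← nrm_pos, hπ p hp]
        exact hp1.pos
      rw [cnt_image _ hπ0, hπ p hp]
      have h3 : cnt G (R / p) ≤ cnt {z | z ∈ G ∧ ¬ p ∣ nrm z} (R / p) +
          cnt {z | z ∈ Set.univ ∧ p ∣ nrm z} (R / p) := by
        refine le_trans (cnt_mono (fun z hz => ?_) _) (cnt_union_le _ _ _)
        by_cases h : p ∣ nrm z
        · exact Or.inr ⟨trivial, h⟩
        · exact Or.inl ⟨hz, h⟩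
      have h4 := cnt_dvd_le (A := Set.univ) (fun _ _ _ => trivial) hp1 (R := R / p) (by positivity)
      have h5 := cnt_le Set.univ (R := R / p / p) (by positivity)
      have h6 : (1 / p * (cnt G (R / p) / (R / p)) - 18 * ((p : ℝ) ^ 2)⁻¹) * R =
          cnt G (R / p) - 2 * (9 * (R / p / p)) := by
        field_simp
        ring
      linarith
    have h3 := Finset.sum_le_sum h2
    rw [← Finset.sum_mul] at h3
    have h4 := h3.trans h1
    exact le_of_mul_le_mul_right h4 hR
  have hlim : Tendsto
      (fun R : ℝ => ∑ p ∈ P, (1 / p * (cnt G (R / p) / (R / p)) - 18 * ((p : ℝ) ^ 2)⁻¹)) atTop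
      (nhds (∑ p ∈ P, (1 / p * d - 18 * ((p : ℝ) ^ 2)⁻¹))) := by
    refine tendsto_finsetSum _ fun p hp => ?_
    have hp0 : (0 : ℝ) < p := by exact_mod_cast (hP p hp).1.pos
    exact ((hd.comp (tendsto_id.atTop_div_const hp0)).const_mul _).sub_const _
  have hle := le_of_tendsto hlim ((eventually_gt_atTop 0).mono fun R hR => hineq R hR)
  rw [Finset.sum_sub_distrib, ← Finset.sum_mul, ← Finset.mul_sum] at hle
  have hsq : ∑ p ∈ P, ((p : ℝ) ^ 2)⁻¹ ≤ 1 := by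
    refine le_trans (Finset.sum_le_sum_of_subset_of_nonneg (t := Finset.Ioo 1 N) ?_
      fun _ _ _ => by positivity) ((sum_Ioo_inv_sq_le 1 N).trans (by norm_num))
    intro p hp
    exact Finset.mem_Ioo.2 ⟨(hP p hp).1.one_lt, (hP p hp).2.2⟩
  by_contra! hcon
  rw [div_lt_iff₀ hδ] at hN
  have : 0 ≤ ∑ p ∈ P, (1 / p : ℝ) := Finset.sum_nonneg fun _ _ => by positivity
  nlinarith

/-! ### Existence and continuity of the limit -/

/-- The number, divided by `R`, of nonzero Gaussian integers of norm `n ≤ R` with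
`n / σ(n) ≤ u`. -/
noncomputable def freq (u R : ℝ) : ℝ := cnt {z | sigmaRatio (nrm z) ≤ u} R / R

lemma trunc_dens {M : ℕ} (hM : 0 < M) (T : Set ℝ) : ∃ d, HasDens {z | trunc M z ∈ T} d :=
  periodic_dens hM fun z w => by rw [Set.mem_ofPred_eq, Set.mem_ofPred_eq, trunc_periodic]

lemma univ_dens : ∃ d, 0 < d ∧ HasDens Set.univ d :=
  periodic_dens_pos one_pos (fun _ _ => Iff.rfl) Set.univ_nonempty

lemma exists_large {a b : ℝ} (ha : 0 < a) (hb : 0 < b) (C : ℝ) (m₀ : ℕ) :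
    ∃ m ≥ m₀, (m : ℝ) / 2 ^ (m + 1) ≤ a ∧ C / (m + 1) ≤ b := by
  have h1 : Tendsto (fun m : ℕ => (m : ℝ) / 2 ^ (m + 1)) atTop (nhds 0) := by
    have := (tendsto_pow_const_div_const_pow_of_one_lt 1 (one_lt_two (α := ℝ))).div_const 2
    rw [zero_div] at this
    refine this.congr fun m => ?_
    rw [pow_one, div_div, pow_succ]
  have h2 : Tendsto (fun m : ℕ => C / ((m : ℝ) + 1)) atTop (nhds 0) := by
    have := (tendsto_const_div_atTop_nhds_zero_nat C).comp (tendsto_add_atTop_nat 1)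
    refine this.congr fun m => ?_
    simp
  obtain ⟨m, hm, hm1, hm2⟩ := ((eventually_ge_atTop m₀).and
    ((h1.eventually_lt_const ha).and (h2.eventually_lt_const hb))).exists
  exact ⟨m, hm, hm1.le, hm2.le⟩

/-- `freq u` is eventually within `η` of the density `g u` of `trunc M z ≤ u` for a suitable `M`,
and `g` has small increments on short multiplicative intervals. -/
lemma comparison {η : ℝ} (hη : 0 < η) : ∃ (g : ℝ → ℝ) (ε : ℝ), 0 < ε ∧ ε < 1 ∧ ∀ u > 0,
    (∀ᶠ R in atTop, |freq u R - g u| ≤ η) ∧ ∀ u', u' ≤ u / (1 - ε) → g u' ≤ g u + η := by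
  obtain ⟨ε, hε, hε1, m₀, hanti⟩ := anticoncentration (δ := η / 4) (by positivity)
  obtain ⟨d₀, hd₀, hU⟩ := univ_dens
  obtain ⟨m, hm, hm1, hm2⟩ := exists_large (a := ε / 2) (b := η / 4) (by positivity)
    (by positivity) (5 * d₀ / (ε / 2)) m₀
  choose g hg using fun u => trunc_dens (modulus_pos m) (Set.Iic u)
  refine ⟨g, ε, hε, hε1, fun u hu => ?_⟩
  obtain ⟨d, hd⟩ := trunc_dens (modulus_pos m) {t | u < t ∧ t ≤ u / (1 - ε)}
  have hdle := hanti m hm u hu d hd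
  have hgu := hg u
  constructor
  · have htail := cnt_tail_le (A := Set.univ) (fun _ _ _ => trivial) hd₀ hU m
      (η := ε / 2) (by positivity)
    have e1 := hgu.eventually_lt_const (show g u < g u + η / 4 by linarith)
    have e2 := hgu.eventually_const_lt (show g u - η < g u by linarith)
    have e3 := hd.eventually_lt_const (show d < d + η / 4 by linarith)
    filter_upwards [htail, e1, e2, e3, eventually_gt_atTop 0] with R h1 h2 h3 h4 hR
    rw [div_lt_iff₀ hR] at h2 h4
    rw [lt_div_iff₀ hR] at h3
    have hlow : cnt {z | trunc (modulus m) z ∈ Set.Iic u} R ≤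
        cnt {z | sigmaRatio (nrm z) ≤ u} R := by
      refine cnt_mono_ne (fun z hz0 hz => ?_) R
      exact le_trans (sigmaRatio_anti (Nat.gcd_dvd_left _ _) (nrm_pos.2 hz0)) hz
    have hup : cnt {z | sigmaRatio (nrm z) ≤ u} R ≤
        cnt {z | trunc (modulus m) z ∈ Set.Iic u} R +
        (cnt {z | trunc (modulus m) z ∈ {t | u < t ∧ t ≤ u / (1 - ε)}} R +
        cnt {z | z ∈ Set.univ ∧ ε / 2 < tail m (nrm z)} R) := by
      refine le_trans (cnt_mono_ne (fun z hz0 hz => ?_) R) ((cnt_union_le _ _ R).trans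
        (add_le_add le_rfl (cnt_union_le _ _ R)))
      by_cases h5 : trunc (modulus m) z ≤ u
      · exact Or.inl h5
      · by_cases h6 : ε / 2 < tail m (nrm z)
        · exact Or.inr (Or.inr ⟨trivial, h6⟩)
        · refine Or.inr (Or.inl ⟨not_le.1 h5, ?_⟩)
          rw [le_div_iff₀ (by linarith)]
          have h7 : trunc (modulus m) z * (1 - (tail m (nrm z) + m / 2 ^ (m + 1))) ≤ u :=
            (sigmaRatio_ge (nrm_pos.2 hz0)).trans hz
          refine le_trans ?_ h7
          have := trunc_pos (modulus_pos m) z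
          gcongr
          linarith
    have hm3 : 5 * d₀ / (ε / 2 * (m + 1)) * R ≤ η / 4 * R := by
      rw [← div_div]
      gcongr
    have h8 : cnt {z | trunc (modulus m) z ∈ {t | u < t ∧ t ≤ u / (1 - ε)}} R <
        (d + η / 4) * R := h4
    have h9 : d * R ≤ η / 4 * R := by gcongr
    have h10 : g u - η ≤ freq u R := by
      rw [freq, le_div_iff₀ hR]
      linarith
    have h11 : freq u R ≤ g u + η := by
      rw [freq, div_le_iff₀ hR]
      linarith
    rw [abs_le]
    constructor <;> linarith
  · intro u' hu'
    refine le_trans (b := g u + d) ?_ (by linarith)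
    refine le_of_tendsto_of_tendsto (hg u') (hgu.add hd) ?_
    filter_upwards [eventually_gt_atTop 0] with R hR
    rw [← add_div]
    gcongr
    refine le_trans (cnt_mono (fun z hz => ?_) R) (cnt_union_le _ _ R)
    by_cases h5 : trunc (modulus m) z ≤ u
    · exact Or.inl h5
    · exact Or.inr ⟨not_le.1 h5, le_trans hz hu'⟩

/-- Continuity at `0`: a small value of `n / σ(n)` forces a large contribution of the primes
`p > m`. -/
lemma freq_small {η : ℝ} (hη : 0 < η) : ∃ u > 0, ∀ᶠ R in atTop, freq u R ≤ η := by
  obtain ⟨d₀, hd₀, hU⟩ := univ_dens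
  obtain ⟨m, -, hm1, hm2⟩ := exists_large (a := 1 / 4) (b := η) (by norm_num)
    hη (5 * d₀ / (1 / 4)) 0
  have hc := sigmaRatio_pos (modulus_pos m)
  refine ⟨sigmaRatio (modulus m) / 4, by positivity, ?_⟩
  filter_upwards [cnt_tail_le (A := Set.univ) (fun _ _ _ => trivial) hd₀ hU m (η := 1 / 4)
    (by norm_num), eventually_gt_atTop 0] with R h1 hR
  rw [freq, div_le_iff₀ hR]
  refine le_trans (cnt_mono_ne (fun z hz0 hz => ?_) R) (h1.trans ?_)
  · refine ⟨trivial, ?_⟩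
    by_contra! h2
    have h3 := sigmaRatio_ge (m := m) (nrm_pos.2 hz0)
    have h4 : sigmaRatio (modulus m) ≤ sigmaRatio ((nrm z).gcd (modulus m)) :=
      sigmaRatio_anti (Nat.gcd_dvd_right _ _) (modulus_pos m)
    have h5 : sigmaRatio (nrm z) ≤ sigmaRatio (modulus m) / 4 := hz
    nlinarith
  · rw [← div_div]
    gcongr

lemma freq_nonneg (u : ℝ) {R : ℝ} (hR : 0 < R) : 0 ≤ freq u R :=
  div_nonneg (cnt_nonneg _ _) hR.le

lemma freq_mono {u v R : ℝ} (h : u ≤ v) (hR : 0 < R) : freq u R ≤ freq v R := by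
  unfold freq
  gcongr
  exact cnt_mono (fun z hz => le_trans hz h) R

lemma freq_of_nonpos {u : ℝ} (hu : u ≤ 0) (R : ℝ) : freq u R = 0 := by
  rw [freq, cnt, Finset.card_eq_zero.2, Nat.cast_zero, zero_div]
  refine Finset.eq_empty_of_forall_notMem fun z hz => ?_
  obtain ⟨⟨hz0, -⟩, hz⟩ := mem_fil.1 hz
  exact absurd (le_trans hz hu) (not_le.2 (sigmaRatio_pos (nrm_pos.2 hz0)))

lemma freq_tendsto (u : ℝ) : ∃ l, Tendsto (freq u) atTop (nhds l) := by
  rcases le_or_gt u 0 with hu | hu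
  · exact ⟨0, tendsto_const_nhds.congr fun R => (freq_of_nonpos hu R).symm⟩
  · refine cauchySeq_tendsto_of_complete (Metric.cauchySeq_iff.2 fun η hη => ?_)
    obtain ⟨g, ε, -, -, h⟩ := comparison (η := η / 3) (by positivity)
    obtain ⟨N, hN⟩ := eventually_atTop.1 (h u hu).1
    refine ⟨N, fun R hR R' hR' => ?_⟩
    have h1 := abs_le.1 (hN R hR)
    have h2 := abs_le.1 (hN R' hR')
    rw [Real.dist_eq, abs_lt]
    constructor <;> linarith

lemma limit_continuous {L : ℝ → ℝ} (hL : ∀ u, Tendsto (freq u) atTop (nhds (L u))) :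
    Continuous L := by
  have hmono : Monotone L := fun u v huv => le_of_tendsto_of_tendsto (hL u) (hL v)
    ((eventually_gt_atTop 0).mono fun R hR => freq_mono huv hR)
  have hzero : ∀ u ≤ 0, L u = 0 := fun u hu => tendsto_nhds_unique (hL u)
    (tendsto_const_nhds.congr fun R => (freq_of_nonpos hu R).symm)
  rw [continuous_iff_continuousAt]
  intro u
  rw [Metric.continuousAt_iff]
  intro η hη
  rcases le_or_gt u 0 with hu | hu
  · obtain ⟨u₀, hu₀, h⟩ := freq_small (η := η / 2) (by positivity)
    have h1 := le_of_tendsto (hL u₀) h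
    refine ⟨u₀, hu₀, fun x hx => ?_⟩
    rw [Real.dist_eq, abs_lt] at hx ⊢
    have h2 := hmono (show x ≤ u₀ by linarith)
    have h3 : 0 ≤ L x := by
      rw [← hzero _ (min_le_right x 0)]
      exact hmono (min_le_left _ _)
    rw [hzero u hu]
    constructor <;> linarith
  · obtain ⟨g, ε, hε, hε1, h⟩ := comparison (η := η / 4) (by positivity)
    have key : ∀ v > 0, ∀ v' ≥ v, v' ≤ v / (1 - ε) → L v' ≤ L v + 3 * (η / 4) := by
      intro v hv v' hvv' hv'
      have h1 : ∀ w > 0, |L w - g w| ≤ η / 4 := fun w hw =>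
        le_of_tendsto ((hL w).sub_const _).abs (h w hw).1
      have h2 := abs_le.1 (h1 v hv)
      have h3 := abs_le.1 (h1 v' (by linarith))
      have h4 := (h v hv).2 v' hv'
      linarith
    refine ⟨u * ε, by positivity, fun x hx => ?_⟩
    rw [Real.dist_eq, abs_lt] at hx ⊢
    rcases le_total x u with hxu | hxu
    · have h1 := key x (by nlinarith) u hxu (by rw [le_div_iff₀ (by linarith)]; linarith)
      have h2 := hmono hxu
      constructor <;> linarith
    · have h1 := key u hu x hxu (by
        rw [le_div_iff₀ (by linarith)]
        have : 0 ≤ u * ε * ε := by positivity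
        nlinarith)
      have h2 := hmono hxu
      constructor <;> linarith

/-! ### Strict monotonicity of the limit -/

/-- The factor `p / (p + 1)` for a prime `p ≡ 1 mod 4`, and `1` otherwise. -/
noncomputable def factor (p : ℕ) : ℝ := if p.Prime ∧ p % 4 = 1 then (p : ℝ) / (p + 1) else 1

lemma factor_nonneg (p : ℕ) : 0 ≤ factor p := by
  unfold factor
  positivity

lemma factor_le_one (p : ℕ) : factor p ≤ 1 := by
  unfold factor
  split_ifs
  · rw [div_le_one (by positivity)]
    linarith
  · exact le_rfl

/-- The products of factors are the ratios at norms of products of Gaussian primes. -/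
lemma exists_nrm_eq (p₀ N : ℕ) : ∃ z : GaussianInt, z ≠ 0 ∧
    sigmaRatio (nrm z) = ∏ i ∈ Finset.range N, factor (i + p₀) ∧
    ∀ p, p.Prime → p ∣ nrm z → p < N + p₀ := by
  induction N with
  | zero =>
    have h1 : nrm 1 = 1 := by simp [nrm]
    refine ⟨1, one_ne_zero, by rw [h1, sigmaRatio_one]; simp, fun p hp h => ?_⟩
    rw [h1] at h
    exact absurd (Nat.dvd_one.1 h) hp.ne_one
  | succ N ih =>
    obtain ⟨z, hz0, hz, hzp⟩ := ih
    by_cases hN : (N + p₀).Prime ∧ (N + p₀) % 4 = 1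
    · have := Fact.mk hN.1
      obtain ⟨a, b, hab⟩ := Nat.Prime.sq_add_sq (p := N + p₀) (by omega)
      have hπ : nrm ⟨a, b⟩ = N + p₀ := by
        have := nrm_int ⟨a, b⟩
        simp only at this
        rw [← hab]
        exact_mod_cast this
      have hc : (N + p₀).Coprime (nrm z) :=
        (Nat.Prime.coprime_iff_not_dvd hN.1).2 fun h => (hzp _ hN.1 h).false
      refine ⟨⟨a, b⟩ * z, mul_ne_zero ?_ hz0, ?_, fun p hp h => ?_⟩
      · rw [← nrm_pos, hπ]
        exact hN.1.pos
      · rw [nrm_mul, hπ, sigmaRatio_mul hc, sigmaRatio_prime hN.1, hz, Finset.prod_range_succ,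
          factor, if_pos hN, mul_comm]
      · rw [nrm_mul, hπ, hp.dvd_mul] at h
        rcases h with h | h
        · have := (Nat.prime_dvd_prime_iff_eq hp hN.1).1 h
          omega
        · have := hzp p hp h
          omega
    · refine ⟨z, hz0, ?_, fun p hp h => ?_⟩
      · rw [hz, Finset.prod_range_succ, factor, if_neg hN, mul_one]
      · have := hzp p hp h
        omega

/-- Since `∑ 1 / p` diverges, the partial products of factors tend to `0`. -/
lemma exists_prod_le (p₀ : ℕ) {u : ℝ} (hu : 0 < u) :
    ∃ N, ∏ i ∈ Finset.range N, factor (i + p₀) ≤ u := by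
  let f : ℕ → ℝ := fun p => if p.Prime ∧ p % 4 = 1 then (1 / p : ℝ) else 0
  have h1 : ¬ Summable fun i => f (i + p₀) := fun h =>
    not_summable_primes ((summable_nat_add_iff p₀).1 h)
  have h2 := (not_summable_iff_tendsto_nat_atTop_of_nonneg (fun n => by
    simp only [f]; positivity)).1 h1
  obtain ⟨N, hN⟩ := (h2.eventually_ge_atTop (-2 * Real.log u)).exists
  refine ⟨N, ?_⟩
  have h3 : ∀ p : ℕ, factor p ≤ Real.exp (-(1 / 2) * f p) := by
    intro p
    simp only [factor, f]
    split_ifs with h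
    · have hp : (1 : ℝ) ≤ p := by exact_mod_cast h.1.one_lt.le
      have h4 := Real.add_one_le_exp (-(1 / 2) * (1 / p : ℝ))
      refine le_trans ?_ h4
      rw [div_le_iff₀ (by linarith)]
      have : (-(1 / 2) * (1 / p) + 1) * ((p : ℝ) + 1) = p + 1 / 2 - 1 / 2 * (1 / p) := by
        field_simp
        ring
      rw [this]
      have : 1 / (p : ℝ) ≤ 1 := by rw [div_le_one (by linarith)]; exact hp
      linarith
    · simp
  calc ∏ i ∈ Finset.range N, factor (i + p₀)
      ≤ ∏ i ∈ Finset.range N, Real.exp (-(1 / 2) * f (i + p₀)) :=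
        Finset.prod_le_prod (fun i _ => factor_nonneg _) fun i _ => h3 _
    _ = Real.exp (-(1 / 2) * ∑ i ∈ Finset.range N, f (i + p₀)) := by
        rw [← Real.exp_sum, Finset.mul_sum]
    _ ≤ Real.exp (Real.log u) := by
        gcongr
        linarith
    _ = u := Real.exp_log hu

/-- The ratios at norms are dense in `[0, 1]`: the partial products of factors with `p ≥ p₀`
decrease from `1` to `0` in steps of size at most `1 / p₀`. -/
lemma exists_between {u₁ u₂ : ℝ} (h0 : 0 ≤ u₁) (h12 : u₁ < u₂) (h2 : u₂ ≤ 1) :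
    ∃ (z : GaussianInt) (m₀ : ℕ), z ≠ 0 ∧ (∀ p, p.Prime → p ∣ nrm z → p ≤ m₀) ∧
      u₁ < sigmaRatio (nrm z) ∧ sigmaRatio (nrm z) ≤ u₂ := by
  classical
  obtain ⟨p₀, hp₀⟩ := exists_nat_gt (1 / (u₂ - u₁))
  have hd : 0 < u₂ - u₁ := by linarith
  have hp₀' : (0 : ℝ) < p₀ := lt_trans (by positivity) hp₀
  rw [div_lt_iff₀ hd] at hp₀
  have hex := exists_prod_le p₀ (h0.trans_lt h12)
  let N := Nat.find hex
  have hN : ∏ i ∈ Finset.range N, factor (i + p₀) ≤ u₂ := Nat.find_spec hex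
  obtain ⟨z, hz0, hz, hzp⟩ := exists_nrm_eq p₀ N
  refine ⟨z, N + p₀, hz0, fun p hp h => (hzp p hp h).le, ?_, hz ▸ hN⟩
  rw [hz]
  rcases hk : N with _ | k
  · simp
    linarith
  · have hk2 : u₂ < ∏ i ∈ Finset.range k, factor (i + p₀) :=
      not_le.1 (Nat.find_min hex (show k < N by omega))
    have hk1 : ∏ i ∈ Finset.range k, factor (i + p₀) ≤ 1 :=
      Finset.prod_le_one (fun i _ => factor_nonneg _) fun i _ => factor_le_one _
    rw [Finset.prod_range_succ]
    have hf : 1 - (u₂ - u₁) ≤ factor (k + p₀) := by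
      unfold factor
      split_ifs
      · push_cast
        have : (0 : ℝ) ≤ k := by positivity
        rw [le_div_iff₀ (by positivity)]
        nlinarith
      · linarith
    set c := ∏ i ∈ Finset.range k, factor (i + p₀)
    have hc0 : 0 ≤ c := by linarith
    have : c * (1 - (u₂ - u₁)) ≤ c * factor (k + p₀) := by gcongr
    nlinarith

/-- Let `u₁ < ρ ≤ u₂` be the ratio at the norm of `z₀`. For `w` of norm free of primes up to a
large `m`, the ratio at the norm of `z₀ * w` is usually only slightly below `ρ`, and such `z₀ * w`
have positive lower density. -/
lemma freq_sub_ge {u₁ u₂ : ℝ} (h0 : 0 ≤ u₁) (h12 : u₁ < u₂) (h2 : u₂ ≤ 1) :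
    ∃ c > 0, ∀ᶠ R in atTop, freq u₁ R + c ≤ freq u₂ R := by
  obtain ⟨z₀, m₀, hz₀, hm₀, hρ1, hρ2⟩ := exists_between h0 h12 h2
  set ρ := sigmaRatio (nrm z₀)
  have hn₀ := nrm_pos.2 hz₀
  have hn₀' : (0 : ℝ) < nrm z₀ := by exact_mod_cast hn₀
  obtain ⟨ε, hε⟩ : ∃ ε, ε = (ρ - u₁) / 4 := ⟨_, rfl⟩
  have hε0 : 0 < ε := by rw [hε]; linarith
  obtain ⟨m, hm, hm1, hm2⟩ := exists_large (a := ε) (b := 1 / 4) hε0 (by norm_num) (5 / ε) m₀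
  let A : Set GaussianInt := {w | (nrm w).gcd (modulus m) = 1}
  have hA : ∀ v w, v * w ∈ A → w ∈ A := by
    intro v w h
    have h : (nrm (v * w)).Coprime (modulus m) := h
    rw [nrm_mul] at h
    exact h.coprime_mul_left
  obtain ⟨δ, hδ, hd⟩ : ∃ d, 0 < d ∧ HasDens A d := by
    refine periodic_dens_pos (modulus_pos m) (fun z w => ?_) ⟨1, ?_⟩
    · change (nrm z).gcd (modulus m) = 1 ↔ (nrm (z + _ * w)).gcd (modulus m) = 1
      rw [gcd_periodic]
    · change (nrm 1).gcd (modulus m) = 1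
      simp [nrm]
  let S : Set GaussianInt := {w | w ≠ 0 ∧ w ∈ A ∧ tail m (nrm w) ≤ ε}
  have hS : ∀ᶠ R in atTop, δ / 2 * R ≤ cnt S R := by
    filter_upwards [cnt_tail_le hA hδ hd m hε0,
      hd.eventually_const_lt (show 3 / 4 * δ < δ by linarith), eventually_gt_atTop 0] with R h3 h4 hR
    rw [lt_div_iff₀ hR] at h4
    have h5 : cnt A R ≤ cnt S R + cnt {z | z ∈ A ∧ ε < tail m (nrm z)} R := by
      refine le_trans (cnt_mono_ne (fun z hz0 hz => ?_) R) (cnt_union_le _ _ R)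
      rcases le_or_gt (tail m (nrm z)) ε with h | h
      · exact Or.inl ⟨hz0, hz, h⟩
      · exact Or.inr ⟨hz, h⟩
    have h6 : 5 * δ / (ε * (m + 1)) * R ≤ δ / 4 * R := by
      have : 5 * δ / (ε * (m + 1)) = δ * (5 / ε / (m + 1)) := by
        rw [div_div]
        ring
      rw [this]
      gcongr
      linarith [mul_le_mul_of_nonneg_left hm2 hδ.le]
    nlinarith
  have hratio : ∀ w ∈ S, u₁ < sigmaRatio (nrm (z₀ * w)) ∧ sigmaRatio (nrm (z₀ * w)) ≤ u₂ := by
    rintro w ⟨hw0, hwA, hwt⟩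
    have hwp := nrm_pos.2 hw0
    have hc : (nrm z₀).Coprime (nrm w) := by
      refine Nat.coprime_of_dvd fun p hp h3 h4 => ?_
      have h5 : p ∣ (nrm w).gcd (modulus m) :=
        Nat.dvd_gcd h4 (prime_dvd_modulus hp ((hm₀ p hp h3).trans hm))
      rw [show (nrm w).gcd (modulus m) = 1 from hwA] at h5
      exact hp.ne_one (Nat.dvd_one.1 h5)
    have h3 := sigmaRatio_ge (m := m) hwp
    rw [show (nrm w).gcd (modulus m) = 1 from hwA, sigmaRatio_one, one_mul] at h3
    have h4 := sigmaRatio_le_one hwp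
    have hρ0 : 0 < ρ := by linarith
    rw [nrm_mul, sigmaRatio_mul hc]
    constructor
    · have h5 : ρ * (1 - 2 * ε) ≤ ρ * sigmaRatio (nrm w) := by
        gcongr
        linarith
      have h6 : ρ * ε ≤ ε := mul_le_of_le_one_left hε0.le (hρ2.trans h2)
      change u₁ < ρ * _
      linarith
    · exact (mul_le_of_le_one_right hρ0.le h4).trans hρ2
  refine ⟨δ / (2 * nrm z₀), by positivity, ?_⟩
  filter_upwards [(tendsto_id.atTop_div_const hn₀').eventually hS, eventually_gt_atTop 0]
    with R h3 hR
  have h4 : cnt {z | sigmaRatio (nrm z) ≤ u₁} R + cnt ((fun z => z₀ * z) '' S) R ≤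
      cnt {z | sigmaRatio (nrm z) ≤ u₂} R := by
    rw [← cnt_union]
    · refine cnt_mono ?_ R
      rintro z (hz | ⟨w, hw, rfl⟩)
      · exact le_trans hz h12.le
      · exact (hratio w hw).2
    · rw [Set.disjoint_left]
      rintro _ hz ⟨w, hw, rfl⟩
      exact absurd (hratio w hw).1 (not_lt.2 hz)
  rw [cnt_image S hz₀] at h4
  simp only [id] at h3
  rw [freq, freq, ← le_sub_iff_add_le', ← sub_div, le_div_iff₀ hR]
  have h5 : δ / (2 * nrm z₀) * R = δ / 2 * (R / nrm z₀) := by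
    field_simp
  rw [h5]
  linarith

end DavTwo

theorem davenport_analogue_two_squares :
    ∃ D : ℝ → ℝ, ContinuousOn D (Set.Icc 0 1) ∧ StrictMonoOn D (Set.Icc 0 1) ∧
      ∀ u ∈ Set.Icc (0 : ℝ) 1,
        Tendsto (fun R : ℝ =>
            (Set.ncard {p : ℤ × ℤ | 0 < p.1 ^ 2 + p.2 ^ 2 ∧
                ((p.1 ^ 2 + p.2 ^ 2 : ℤ) : ℝ) ≤ R ∧
                sigmaRatio (p.1 ^ 2 + p.2 ^ 2).toNat ≤ u} : ℝ) / (Real.pi * R))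
          atTop (nhds (D u)) := by
  choose L hL using DavTwo.freq_tendsto
  refine ⟨fun u => L u / Real.pi, ((DavTwo.limit_continuous hL).div_const _).continuousOn,
    fun u₁ h1 u₂ h2 h12 => ?_, fun u _ => ?_⟩
  · obtain ⟨c, hc, h⟩ := DavTwo.freq_sub_ge h1.1 h12 h2.2
    have := le_of_tendsto_of_tendsto ((hL u₁).add_const c) (hL u₂) h
    exact div_lt_div_of_pos_right (by linarith) Real.pi_pos
  · refine ((hL u).div_const Real.pi).congr fun R => ?_
    have key : {p : ℤ × ℤ | 0 < p.1 ^ 2 + p.2 ^ 2 ∧ ((p.1 ^ 2 + p.2 ^ 2 : ℤ) : ℝ) ≤ R ∧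
        sigmaRatio (p.1 ^ 2 + p.2 ^ 2).toNat ≤ u} = (fun z : GaussianInt => (z.re, z.im)) ''
          (DavTwo.fil {z | sigmaRatio (DavTwo.nrm z) ≤ u} R : Set GaussianInt) := by
      have hn : ∀ z : GaussianInt, (z.re ^ 2 + z.im ^ 2).toNat = DavTwo.nrm z := fun z => by
        rw [← DavTwo.nrm_int, Int.toNat_natCast]
      ext ⟨x, y⟩
      constructor
      · rintro ⟨h1, h2, h3⟩
        refine ⟨⟨x, y⟩, Finset.mem_coe.2 (DavTwo.mem_fil.2 ⟨⟨?_, ?_⟩, ?_⟩), rfl⟩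
        · rw [← DavTwo.nrm_pos]
          have := DavTwo.nrm_int ⟨x, y⟩
          simp only at this h1
          omega
        · rw [← Int.cast_natCast, DavTwo.nrm_int]
          exact h2
        · change sigmaRatio (DavTwo.nrm ⟨x, y⟩) ≤ u
          rw [← hn]
          exact h3
      · rintro ⟨z, hz, hzxy⟩
        obtain ⟨⟨h1, h2⟩, h3⟩ := DavTwo.mem_fil.1 (Finset.mem_coe.1 hz)
        cases hzxy
        refine ⟨?_, ?_, ?_⟩
        · have := DavTwo.nrm_pos.2 h1
          change 0 < z.re ^ 2 + z.im ^ 2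
          rw [← DavTwo.nrm_int]
          exact_mod_cast this
        · change ((z.re ^ 2 + z.im ^ 2 : ℤ) : ℝ) ≤ R
          rw [← DavTwo.nrm_int]
          exact_mod_cast h2
        · change sigmaRatio (z.re ^ 2 + z.im ^ 2).toNat ≤ u
          rw [hn]
          exact h3
    rw [key, Set.ncard_image_of_injective _ DavTwo.inj_pair, Set.ncard_coe_finset, DavTwo.freq,
      DavTwo.cnt, div_div, mul_comm R]
end
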